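/- arXiv:1509.07422 — 12 statements merged into one kernel-verified Lean document; each statement's English description precedes it below -/
import Mathlib

section
/- Let H be a real Hilbert space, let f, g : H → ℝ be differentiable with f m-strongly convex for some m > 0, and let x_f and x_g be minimizers of f and g respectively (so ∇f(x_f) = 0 and ∇g(x_g) = 0). Then ‖x_f − x_g‖ ≤ (1/m)‖∇f(x_g) − ∇g(x_g)‖. -/
open MeasureTheory
open scoped RealInnerProductSpace

/-- If `f` is `m`-strongly convex and `g` is differentiable, with respective
minimizers `x_f` and `x_g` (so the gradients vanish there), then
`‖x_f - x_g‖ ≤ (1/m) ‖∇f(x_g) - ∇g(x_g)‖`. -/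
theorem strong_convexity_minimizer_perturbation
    {H : Type*} [NormedAddCommGroup H] [InnerProductSpace ℝ H] [CompleteSpace H]
    (f g : H → ℝ) (m : ℝ) (hm : 0 < m)
    (hfdiff : Differentiable ℝ f) (hgdiff : Differentiable ℝ g)
    (hconv : ∀ x y : H, f x + ⟪gradient f x, y - x⟫ + m / 2 * ‖y - x‖ ^ 2 ≤ f y)
    (xf xg : H)
    (hxf : ∀ y : H, f xf ≤ f y) (hxg : ∀ y : H, g xg ≤ g y)
    (hgradf : gradient f xf = 0) (hgradg : gradient g xg = 0) :
    ‖xf - xg‖ ≤ (1 / m) * ‖gradient f xg - gradient g xg‖ := by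
  have h1 := hconv xf xg
  have h2 := hconv xg xf
  rw [hgradf, inner_zero_left, norm_sub_rev] at h1
  have h3 := neg_le_of_abs_le (abs_real_inner_le_norm (gradient f xg) (xf - xg))
  rw [hgradg, sub_zero, one_div, ← div_eq_inv_mul, le_div_iff₀ hm]
  rcases (norm_nonneg (xf - xg)).eq_or_lt with h | h
  · rw [← h, zero_mul]
    exact norm_nonneg _
  · refine le_of_mul_le_mul_right ?_ h
    nlinarith
end

section
/- Let H be a real Hilbert space, Z a measurable space, and p, q two probability measures on Z. Let ℓ : H × Z → ℝ be a loss function differentiable in its first argument, and let f(x) = ∫ ℓ(x, z) dp(z) and g(x) = ∫ ℓ(x, z) dq(z), where the gradients satisfy ∇f(x) = ∫ ∇ₓℓ(x, z) dp(z) and ∇g(x) = ∫ ∇ₓℓ(x, z) dq(z) for all x (with all integrands Bochner integrable). Suppose f and g are m-strongly convex for some m > 0 with minimizers x_f and x_g, and let 𝓕 be a set of functions from Z to H such that for every x ∈ H the map z ↦ ∇ₓℓ(x, z) belongs to 𝓕 and is integrable with respect to both p and q. Then ‖x_f − x_g‖ ≤ (1/m) · sup_{h ∈ 𝓕} ‖∫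 h(z) dp(z) − ∫ h(z) dq(z)‖. -/
open MeasureTheory
open scoped RealInnerProductSpace ENNReal

/-- **Lemma 1 of the paper.** The vector integral probability metric
`γ_𝓕(p, q) = sup_{h ∈ 𝓕} ‖E_{z∼p}[h(z)] − E_{z∼q}[h(z)]‖` bounds the distance between the
minimizers of the expected losses `f(x) = E_{z∼p}[ℓ(x,z)]` and `g(x) = E_{z∼q}[ℓ(x,z)]`,
provided every gradient map `z ↦ ∇ₓℓ(x, z)` belongs to the class `𝓕`:
`‖x_f − x_g‖ ≤ (1/m) · γ_𝓕(p, q)`. -/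
theorem vector_ipm_bounds_minimizer_change
    {H : Type*} [NormedAddCommGroup H] [InnerProductSpace ℝ H] [CompleteSpace H]
    {Z : Type*} [MeasurableSpace Z]
    (p q : Measure Z) [IsProbabilityMeasure p] [IsProbabilityMeasure q]
    (ℓ : H → Z → ℝ) (gradℓ : H → Z → H)
    (hdiff : ∀ z : Z, ∀ x : H, HasGradientAt (fun x' => ℓ x' z) (gradℓ x z) x)
    (f g : H → ℝ)
    (hf : ∀ x : H, f x = ∫ z, ℓ x z ∂p) (hg : ∀ x : H, g x = ∫ z, ℓ x z ∂q)
    (hfdiff : Differentiable ℝ f) (hgdiff : Differentiable ℝ g)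
    (hgradf : ∀ x : H, gradient f x = ∫ z, gradℓ x z ∂p)
    (hgradg : ∀ x : H, gradient g x = ∫ z, gradℓ x z ∂q)
    (m : ℝ) (hm : 0 < m)
    (hconvf : ∀ x y : H, f x + ⟪gradient f x, y - x⟫ + m / 2 * ‖y - x‖ ^ 2 ≤ f y)
    (hconvg : ∀ x y : H, g x + ⟪gradient g x, y - x⟫ + m / 2 * ‖y - x‖ ^ 2 ≤ g y)
    (xf xg : H) (hxf : ∀ y : H, f xf ≤ f y) (hxg : ∀ y : H, g xg ≤ g y)
    (𝓕 : Set (Z → H))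
    (hmem : ∀ x : H, (fun z => gradℓ x z) ∈ 𝓕)
    (hintp : ∀ x : H, Integrable (fun z => gradℓ x z) p)
    (hintq : ∀ x : H, Integrable (fun z => gradℓ x z) q) :
    ENNReal.ofReal ‖xf - xg‖ ≤
      ENNReal.ofReal (1 / m) *
        ⨆ h ∈ 𝓕, ENNReal.ofReal ‖(∫ z, h z ∂p) - ∫ z, h z ∂q‖ := by
  have gf : gradient f xf = 0 := by
    have h : fderiv ℝ f xf = 0 :=
      IsLocalMin.fderiv_eq_zero (Filter.Eventually.of_forall hxf)
    simp [gradient, h]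
  have gg : gradient g xg = 0 := by
    have h : fderiv ℝ g xg = 0 :=
      IsLocalMin.fderiv_eq_zero (Filter.Eventually.of_forall hxg)
    simp [gradient, h]
  have h1 := hconvg xf xg
  have h2 := hconvg xg xf
  rw [gg, inner_zero_left] at h2
  rw [norm_sub_rev xg xf] at h1
  have h3 : -(‖gradient g xf‖ * ‖xf - xg‖) ≤ ⟪gradient g xf, xg - xf⟫ := by
    have h := abs_real_inner_le_norm (gradient g xf) (xg - xf)
    rw [norm_sub_rev xg xf] at h
    exact (abs_le.mp h).1
  have h4 : m * ‖xf - xg‖ ≤ ‖gradient g xf‖ := by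
    rcases (norm_nonneg (xf - xg)).eq_or_lt with h0 | h0
    · rw [← h0, mul_zero]
      exact norm_nonneg _
    · refine le_of_mul_le_mul_right ?_ h0
      nlinarith
  have h5 : ‖xf - xg‖ ≤ 1 / m * ‖(∫ z, gradℓ xf z ∂p) - ∫ z, gradℓ xf z ∂q‖ := by
    rw [← hgradf, ← hgradg, gf, zero_sub, norm_neg, one_div, inv_mul_eq_div, le_div_iff₀ hm]
    linarith
  refine (ENNReal.ofReal_le_ofReal h5).trans ?_
  rw [ENNReal.ofReal_mul (by positivity)]
  gcongr
  exact le_iSup₂_of_le (fun z => gradℓ xf z) (hmem xf) le_rfl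
end

section
/- Let (Ω, 𝓕, P) be a probability space with a filtration 𝓕₀ ⊆ 𝓕₁ ⊆ ⋯ ⊆ 𝓕ₙ, let W ≥ 1 be an integer, and partition {1, …, n} into the sets 𝓐ⱼ = {j, j+W, j+2W, …} for j = 1, …, W. Let V₁, …, Vₙ be real random variables such that: (i) aᵢ ≤ Vᵢ ≤ bᵢ almost surely for constants aᵢ ≤ bᵢ; (ii) Vᵢ is 𝓕ᵢ-measurable; (iii) for each j ∈ {1,…,W} and each i ≥ 1 with j + iW ≤ n, E[V_{j+iW} | 𝓕_{j+(i−1)W}] = 0 almost surely, and E[Vⱼ | 𝓕₀] = 0 almost surely. Then for every t > 0, P{Σᵢ Vᵢ > t} ≤ exp(−2t²/(W Σᵢ (bᵢ − aᵢ)²)) and P{Σᵢ Vᵢ < −t} ≤ exp(−2t²/(W Σᵢ (bᵢ − aᵢ)²)). -/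
open MeasureTheory

open ProbabilityTheory in
lemma dhi_step {Ω : Type*} {m m0 : MeasurableSpace Ω} (hm : m ≤ m0) (P : Measure Ω)
    [IsProbabilityMeasure P] {S V : Ω → ℝ} {c : NNReal} {a b : ℝ}
    (hS : HasSubgaussianMGF S c P) (hSm : StronglyMeasurable[m] S)
    (hV : AEStronglyMeasurable V P) (hb : ∀ᵐ ω ∂P, V ω ∈ Set.Icc a b)
    (hc : P[V|m] =ᵐ[P] 0) :
    HasSubgaussianMGF (fun ω => S ω + V ω) (c + (‖b - a‖₊ / 2) ^ 2) P := by
  have key : ∀ t : ℝ, HasSubgaussianMGF V ((‖b - a‖₊ / 2) ^ 2) (P.tilted (fun ω => t * S ω)) := by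
    intro t
    have hi := hS.integrable_exp_mul t
    have := isProbabilityMeasure_tilted hi
    have hac := tilted_absolutelyContinuous P (fun ω => t * S ω)
    have hb' := hac.ae_le hb
    have hVm : AEMeasurable V (P.tilted (fun ω => t * S ω)) := hV.aemeasurable.mono_ac hac
    refine hasSubgaussianMGF_of_mem_Icc_of_integral_eq_zero hVm hb' ?_
    have hVi : Integrable V (P.tilted (fun ω => t * S ω)) := Integrable.of_mem_Icc a b hVm hb'
    have hVi0 : Integrable V P := Integrable.of_mem_Icc a b hV.aemeasurable hb
    rw [integrable_tilted_iff hi] at hVi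
    have hsm : StronglyMeasurable[m] (fun ω => Real.exp (t * S ω)) :=
      Real.continuous_exp.comp_stronglyMeasurable (hSm.const_mul t)
    have h1 := condExp_mul_of_stronglyMeasurable_left (μ := P) hsm (g := V) hVi hVi0
    have h2 : ∫ ω, Real.exp (t * S ω) * V ω ∂P = 0 := by
      have h3 := integral_condExp (μ := P) hm (f := (fun ω => Real.exp (t * S ω)) * V)
      have h4 : P[(fun ω => Real.exp (t * S ω)) * V|m] =ᵐ[P] 0 := by
        filter_upwards [h1, hc] with ω h5 h6
        rw [h5]; simp [h6]
      rw [integral_congr_ae h4] at h3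
      simpa using h3.symm
    rw [integral_tilted]
    simp only [smul_eq_mul, div_mul_eq_mul_div]
    rw [integral_div, h2, zero_div]
  refine ⟨fun t => ?_, fun t => ?_⟩
  · have := (key t).integrable_exp_mul t
    rw [integrable_tilted_iff (hS.integrable_exp_mul t)] at this
    refine this.congr (ae_of_all _ fun ω => ?_)
    simp [mul_add, Real.exp_add]
  · have h1 := (key t).mgf_le t
    have h2 := hS.mgf_le t
    have hpos : 0 < ∫ ω, Real.exp (t * S ω) ∂P := integral_exp_pos (hS.integrable_exp_mul t)
    unfold mgf at h1 h2 ⊢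
    rw [integral_exp_tilted, div_le_iff₀ hpos] at h1
    have h3 : ∀ ω, t * (S ω + V ω) = ((fun ω => t * S ω) + fun ω => t * V ω) ω := by
      intro ω; simp [mul_add]
    simp only [h3]
    refine h1.trans ((mul_le_mul_of_nonneg_left h2 (Real.exp_pos _).le).trans_eq ?_)
    rw [← Real.exp_add]
    congr 1
    push_cast
    ring

open ProbabilityTheory in
lemma dhi_mono {Ω : Type*} {m0 : MeasurableSpace Ω} {P : Measure Ω} {S : Ω → ℝ} {c d : NNReal}
    (hS : HasSubgaussianMGF S c P) (h : c ≤ d) : HasSubgaussianMGF S d P := by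
  refine ⟨hS.integrable_exp_mul, fun t => (hS.mgf_le t).trans ?_⟩
  have : (c : ℝ) ≤ d := h
  gcongr

open ProbabilityTheory in
lemma dhi_sum {Ω : Type*} {m0 : MeasurableSpace Ω} {P : Measure Ω} [IsProbabilityMeasure P]
    {S : ℕ → Ω → ℝ} {c : ℕ → NNReal} (hS : ∀ j, HasSubgaussianMGF (S j) (c j) P) (W : ℕ) :
    HasSubgaussianMGF (fun ω => ∑ j ∈ Finset.range W, S j ω)
      ((∑ j ∈ Finset.range W, (c j).sqrt) ^ 2) P := by
  induction W with
  | zero => simp [HasSubgaussianMGF.fun_zero]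
  | succ W ih =>
    simp only [Finset.sum_range_succ]
    simpa using ih.add (hS W)

open ProbabilityTheory in
lemma dhi_prog {Ω : Type*} {m0 : MeasurableSpace Ω} (P : Measure Ω) [IsProbabilityMeasure P]
    (W : ℕ) (ℱ : Filtration ℕ m0) (V : ℕ → Ω → ℝ) (a b : ℕ → ℝ)
    (hbd : ∀ i, ∀ᵐ ω ∂P, V i ω ∈ Set.Icc (a i) (b i))
    (hmeas : ∀ i, StronglyMeasurable[ℱ i] (V i)) (j : ℕ)
    (hcond : ∀ i : ℕ, P[V (j + (i + 1) * W)|ℱ (j + i * W)] =ᵐ[P] 0)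
    (hcond0 : P[V j|ℱ 0] =ᵐ[P] 0) (N : ℕ) :
    HasSubgaussianMGF (fun ω => ∑ k ∈ Finset.range N, V (j + k * W) ω)
      (∑ k ∈ Finset.range N, (‖b (j + k * W) - a (j + k * W)‖₊ / 2) ^ 2) P := by
  induction N with
  | zero => simp [HasSubgaussianMGF.fun_zero]
  | succ N ih =>
    simp only [Finset.sum_range_succ]
    have hV := ((hmeas (j + N * W)).mono (ℱ.le _)).aestronglyMeasurable (μ := P)
    cases N with
    | zero =>
      refine dhi_step (ℱ.le 0) P ih ?_ hV (hbd _) (by simpa using hcond0)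
      simpa using stronglyMeasurable_const
    | succ N =>
      refine dhi_step (ℱ.le (j + N * W)) P ih ?_ hV (hbd _) (hcond N)
      refine Finset.stronglyMeasurable_fun_sum _ fun k hk => (hmeas _).mono (ℱ.mono ?_)
      have : k ≤ N := by simpa [Nat.lt_succ_iff] using hk
      gcongr

lemma dhi_reindex {M : Type*} [AddCommMonoid M] (f : ℕ → M) (n W : ℕ) (hW : 1 ≤ W)
    (hf : ∀ i, i ∉ Finset.Icc 1 n → f i = 0) :
    ∑ j ∈ Finset.range W, ∑ k ∈ Finset.range n, f ((j + 1) + k * W)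
      = ∑ i ∈ Finset.Icc 1 n, f i := by
  have h1 : ∀ N, ∑ k ∈ Finset.range N, ∑ j ∈ Finset.range W, f ((j + 1) + k * W)
      = ∑ i ∈ Finset.range (N * W), f (i + 1) := by
    intro N
    induction N with
    | zero => simp
    | succ N ih =>
      rw [Finset.sum_range_succ, ih, Nat.succ_mul, Finset.sum_range_add]
      congr 1
      refine Finset.sum_congr rfl fun j _ => ?_
      congr 1; ring
  have h2 : ∑ i ∈ Finset.range (n * W), f (i + 1) = ∑ i ∈ Finset.range n, f (i + 1) := by
    symm
    refine Finset.sum_subset ?_ fun i _ hi => hf _ ?_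
    · exact Finset.range_subset_range.2 (Nat.le_mul_of_pos_right n hW)
    · simp at hi ⊢; omega
  have h3 : ∑ i ∈ Finset.range n, f (i + 1) = ∑ i ∈ Finset.Icc 1 n, f i := by
    rw [Finset.range_eq_Ico, Finset.sum_Ico_add' f 0 n 1]
    rfl
  rw [Finset.sum_comm, h1, h2, h3]

open ProbabilityTheory in
lemma dhi_core {Ω : Type*} {m0 : MeasurableSpace Ω} (P : Measure Ω) [IsProbabilityMeasure P]
    (n W : ℕ) (hW : 1 ≤ W)
    (ℱ : Filtration ℕ m0)
    (V : ℕ → Ω → ℝ) (a b : ℕ → ℝ)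
    (hbd : ∀ i ∈ Finset.Icc 1 n, ∀ᵐ ω ∂P, a i ≤ V i ω ∧ V i ω ≤ b i)
    (hmeas : ∀ i ∈ Finset.Icc 1 n, StronglyMeasurable[ℱ i] (V i))
    (hcond : ∀ j ∈ Finset.Icc 1 W, ∀ i : ℕ, 1 ≤ i → j + i * W ≤ n →
      P[V (j + i * W)|ℱ (j + (i - 1) * W)] =ᵐ[P] 0)
    (hcond0 : ∀ j ∈ Finset.Icc 1 W, j ≤ n → P[V j|ℱ 0] =ᵐ[P] 0) :
    HasSubgaussianMGF (fun ω => ∑ i ∈ Finset.Icc 1 n, V i ω)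
      (W * ∑ i ∈ Finset.Icc 1 n, (‖b i - a i‖₊ / 2) ^ 2) P := by
  let V' : ℕ → Ω → ℝ := fun i => if i ∈ Finset.Icc 1 n then V i else 0
  let a' : ℕ → ℝ := fun i => if i ∈ Finset.Icc 1 n then a i else 0
  let b' : ℕ → ℝ := fun i => if i ∈ Finset.Icc 1 n then b i else 0
  have V1 : ∀ i ∈ Finset.Icc 1 n, V' i = V i := fun i hi => if_pos hi
  have V0 : ∀ i, i ∉ Finset.Icc 1 n → V' i = 0 := fun i hi => if_neg hi
  have a1 : ∀ i ∈ Finset.Icc 1 n, a' i = a i := fun i hi => if_pos hi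
  have a0 : ∀ i, i ∉ Finset.Icc 1 n → a' i = 0 := fun i hi => if_neg hi
  have b1 : ∀ i ∈ Finset.Icc 1 n, b' i = b i := fun i hi => if_pos hi
  have b0 : ∀ i, i ∉ Finset.Icc 1 n → b' i = 0 := fun i hi => if_neg hi
  have hbd' : ∀ i, ∀ᵐ ω ∂P, V' i ω ∈ Set.Icc (a' i) (b' i) := by
    intro i
    by_cases hi : i ∈ Finset.Icc 1 n
    · rw [V1 i hi, a1 i hi, b1 i hi]; exact hbd i hi
    · rw [V0 i hi, a0 i hi, b0 i hi]; simp
  have hmeas' : ∀ i, StronglyMeasurable[ℱ i] (V' i) := by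
    intro i
    by_cases hi : i ∈ Finset.Icc 1 n
    · rw [V1 i hi]; exact hmeas i hi
    · rw [V0 i hi]; exact stronglyMeasurable_zero
  let c : ℕ → NNReal := fun j => if j < W then
    ∑ k ∈ Finset.range n, (‖b' ((j + 1) + k * W) - a' ((j + 1) + k * W)‖₊ / 2) ^ 2 else 0
  let S : ℕ → Ω → ℝ := fun j => if j < W then
    fun ω => ∑ k ∈ Finset.range n, V' ((j + 1) + k * W) ω else 0
  have hS : ∀ j, HasSubgaussianMGF (S j) (c j) P := by
    intro j
    by_cases hj : j < W
    · simp only [S, c, if_pos hj]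
      have hj' : j + 1 ∈ Finset.Icc 1 W := by simp; omega
      refine dhi_prog P W ℱ V' a' b' hbd' hmeas' (j + 1) (fun i => ?_) ?_ n
      · by_cases hi : j + 1 + (i + 1) * W ∈ Finset.Icc 1 n
        · rw [V1 _ hi]
          exact hcond (j + 1) hj' (i + 1) (by omega) (Finset.mem_Icc.1 hi).2
        · rw [V0 _ hi, condExp_zero]
      · by_cases hi : j + 1 ∈ Finset.Icc 1 n
        · rw [V1 _ hi]
          exact hcond0 (j + 1) hj' (Finset.mem_Icc.1 hi).2
        · rw [V0 _ hi, condExp_zero]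
    · simp only [S, c, if_neg hj]; exact HasSubgaussianMGF.zero
  have h := dhi_sum hS W
  have e1 : (fun ω => ∑ j ∈ Finset.range W, S j ω) = fun ω => ∑ i ∈ Finset.Icc 1 n, V i ω := by
    funext ω
    rw [← Finset.sum_congr rfl (fun i hi => congrFun (V1 i hi) ω),
      ← dhi_reindex (fun i => V' i ω) n W hW (fun i hi => congrFun (V0 i hi) ω)]
    refine Finset.sum_congr rfl fun j hj => ?_
    simp only [S, if_pos (Finset.mem_range.1 hj)]
  have e2 : ∑ j ∈ Finset.range W, c j = ∑ i ∈ Finset.Icc 1 n, (‖b i - a i‖₊ / 2) ^ 2 := by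
    have : ∀ i ∈ Finset.Icc 1 n, (‖b' i - a' i‖₊ / 2) ^ 2 = (‖b i - a i‖₊ / 2) ^ 2 := by
      intro i hi; rw [a1 i hi, b1 i hi]
    rw [← Finset.sum_congr rfl this,
      ← dhi_reindex (fun i => (‖b' i - a' i‖₊ / 2) ^ 2) n W hW
        (fun i hi => by simp only [a0 i hi, b0 i hi]; simp)]
    refine Finset.sum_congr rfl fun j hj => ?_
    simp only [c, if_pos (Finset.mem_range.1 hj)]
  rw [e1] at h
  refine dhi_mono h ?_
  rw [← e2]
  have h5 := sq_sum_le_card_mul_sum_sq (s := Finset.range W)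
    (f := fun j => √(c j : ℝ))
  rw [← NNReal.coe_le_coe]
  push_cast
  refine h5.trans_eq ?_
  simp

/-- **Dependent Hoeffding's inequality, Lemma 4.**
Suppose `V₁, …, Vₙ` are bounded (`aᵢ ≤ Vᵢ ≤ bᵢ` a.s.), adapted to the filtration `𝓕`, and
along each arithmetic progression `𝓐ⱼ = {j, j + W, j + 2W, …}` (for `j = 1, …, W`) the
conditional means vanish: `E[V_{j+iW} | 𝓕_{j+(i−1)W}] = 0` and `E[Vⱼ | 𝓕₀] = 0`.
Then both tails of `Σᵢ Vᵢ` are bounded by `exp(−2t² / (W Σᵢ (bᵢ − aᵢ)²))`. -/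
theorem dependent_hoeffding_inequality
    {Ω : Type*} {m0 : MeasurableSpace Ω} (P : Measure Ω) [IsProbabilityMeasure P]
    (n W : ℕ) (hW : 1 ≤ W)
    (ℱ : Filtration ℕ m0)
    (V : ℕ → Ω → ℝ) (a b : ℕ → ℝ)
    (hab : ∀ i ∈ Finset.Icc 1 n, a i ≤ b i)
    (hbd : ∀ i ∈ Finset.Icc 1 n, ∀ᵐ ω ∂P, a i ≤ V i ω ∧ V i ω ≤ b i)
    (hmeas : ∀ i ∈ Finset.Icc 1 n, StronglyMeasurable[ℱ i] (V i))
    (hint : ∀ i ∈ Finset.Icc 1 n, Integrable (V i) P)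
    (hcond : ∀ j ∈ Finset.Icc 1 W, ∀ i : ℕ, 1 ≤ i → j + i * W ≤ n →
      P[V (j + i * W)|ℱ (j + (i - 1) * W)] =ᵐ[P] 0)
    (hcond0 : ∀ j ∈ Finset.Icc 1 W, j ≤ n → P[V j|ℱ 0] =ᵐ[P] 0)
    (t : ℝ) (ht : 0 < t) :
    (P {ω | t < ∑ i ∈ Finset.Icc 1 n, V i ω}).toReal ≤
        Real.exp (-2 * t ^ 2 / (W * ∑ i ∈ Finset.Icc 1 n, (b i - a i) ^ 2)) ∧
      (P {ω | ∑ i ∈ Finset.Icc 1 n, V i ω < -t}).toReal ≤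
        Real.exp (-2 * t ^ 2 / (W * ∑ i ∈ Finset.Icc 1 n, (b i - a i) ^ 2)) := by
  have h := dhi_core P n W hW ℱ V a b hbd hmeas hcond hcond0
  have e : ∀ c : NNReal, c = W * ∑ i ∈ Finset.Icc 1 n, (‖b i - a i‖₊ / 2) ^ 2 →
      -t ^ 2 / (2 * (c : ℝ)) = -2 * t ^ 2 / (W * ∑ i ∈ Finset.Icc 1 n, (b i - a i) ^ 2) := by
    rintro c rfl
    have : ((W * ∑ i ∈ Finset.Icc 1 n, (‖b i - a i‖₊ / 2) ^ 2 : NNReal) : ℝ)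
        = (W * ∑ i ∈ Finset.Icc 1 n, (b i - a i) ^ 2) / 4 := by
      push_cast
      rw [mul_div_assoc, Finset.sum_div]
      congr 1
      refine Finset.sum_congr rfl fun i _ => ?_
      rw [div_pow, Real.norm_eq_abs, sq_abs]
      norm_num
    rw [this]
    generalize (W * ∑ i ∈ Finset.Icc 1 n, (b i - a i) ^ 2 : ℝ) = x
    by_cases hx : x = 0
    · simp [hx]
    · field_simp
      norm_num
  constructor
  · have h1 := h.measure_ge_le ht.le
    rw [e _ rfl] at h1
    refine le_trans ?_ h1
    refine ENNReal.toReal_mono (measure_ne_top _ _) (measure_mono fun ω hω => ?_)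
    have h2 : t < ∑ i ∈ Finset.Icc 1 n, V i ω := hω
    exact h2.le
  · have h1 := h.neg.measure_ge_le ht.le
    rw [e _ rfl] at h1
    refine le_trans ?_ h1
    refine ENNReal.toReal_mono (measure_ne_top _ _) (measure_mono fun ω hω => ?_)
    have : ∑ i ∈ Finset.Icc 1 n, V i ω < -t := hω
    show t ≤ -∑ i ∈ Finset.Icc 1 n, V i ω
    linarith
end

section
/- Let (Ω, 𝓕, P) be a probability space with a filtration 𝓚₀ ⊆ 𝓚₁ ⊆ ⋯ ⊆ 𝓚ₙ (with the convention 𝓚ᵢ = 𝓚₀ for i < 0), and let ρ̃₁, …, ρ̃ₙ be random variables with 0 ≤ ρ̃ᵢ ≤ D almost surely for a constant D > 0, each ρ̃ᵢ being 𝓚ᵢ-measurable, and E[ρ̃ᵢ | 𝓚_{i−2}] ≥ ρ almost surely for every i, where ρ ≥ 0. Then for every t > 0, P{ (1/n) Σ_{i=1}^n ρ̃ᵢ < ρ − t } ≤ exp(−n t² / (4 D²)). -/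
open MeasureTheory

lemma aux_exp_le (y : ℝ) (hy : 0 ≤ y) : Real.exp (-y) ≤ 1 - y + y ^ 2 / 2 := by
  have h := Real.quadratic_le_exp_of_nonneg hy
  have h1 : Real.exp (-y) * Real.exp y = 1 := by rw [← Real.exp_add]; simp
  have h2 : (0:ℝ) < 1 - y + y ^ 2 / 2 := by nlinarith [sq_nonneg (y - 1)]
  have h3 : (1:ℝ) ≤ (1 - y + y ^ 2 / 2) * Real.exp y := by
    have := mul_le_mul_of_nonneg_left h h2.le
    nlinarith [sq_nonneg (y ^ 2)]
  have h4 := Real.exp_pos y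
  by_contra hc
  push Not at hc
  nlinarith [mul_lt_mul_of_pos_right hc h4]

lemma aux_step {Ω : Type*} {m0 : MeasurableSpace Ω} (P : Measure Ω) [IsProbabilityMeasure P]
    (m : MeasurableSpace Ω) (hm : m ≤ m0) (W X : Ω → ℝ) (D ρ l : ℝ) (hl : 0 ≤ l)
    (hW : StronglyMeasurable[m] W) (hW0 : ∀ ω, 0 ≤ W ω) (hWi : Integrable W P)
    (hX : ∀ᵐ ω ∂P, 0 ≤ X ω ∧ X ω ≤ D) (hXi : Integrable X P)
    (hb : ∀ᵐ ω ∂P, ρ ≤ (P[X|m]) ω) :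
    Integrable (fun ω => W ω * Real.exp (-l * (X ω - ρ) - l ^ 2 * D ^ 2 / 2)) P ∧
    ∫ ω, W ω * Real.exp (-l * (X ω - ρ) - l ^ 2 * D ^ 2 / 2) ∂P ≤ ∫ ω, W ω ∂P := by
  have hWX : Integrable (fun ω => W ω * X ω) P := by
    refine hWi.mul_bdd (c := D) hXi.aestronglyMeasurable ?_
    filter_upwards [hX] with ω h
    rw [Real.norm_eq_abs, abs_of_nonneg h.1]; exact h.2
  have hI : Integrable (fun ω => W ω * Real.exp (-l * (X ω - ρ) - l ^ 2 * D ^ 2 / 2)) P := by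
    refine hWi.mul_bdd (c := Real.exp (l * ρ)) ?_ ?_
    · have : Continuous (fun x : ℝ => Real.exp (-l * (x - ρ) - l ^ 2 * D ^ 2 / 2)) := by fun_prop
      exact this.comp_aestronglyMeasurable hXi.aestronglyMeasurable
    · filter_upwards [hX] with ω h
      rw [Real.norm_eq_abs, Real.abs_exp]
      apply Real.exp_le_exp.2
      nlinarith [mul_nonneg hl h.1, sq_nonneg (l * D)]
  refine ⟨hI, ?_⟩
  have key : ρ * ∫ ω, W ω ∂P ≤ ∫ ω, W ω * X ω ∂P := by
    have e := condExp_mul_of_stronglyMeasurable_left (μ := P) hW (g := X) hWX hXi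
    have e2 : ∫ ω, W ω * X ω ∂P = ∫ ω, (P[W * X|m]) ω ∂P := (integral_condExp hm).symm
    rw [e2, ← integral_const_mul]
    refine integral_mono_ae (hWi.const_mul _) integrable_condExp ?_
    filter_upwards [e, hb] with ω h1 h2
    rw [h1, Pi.mul_apply]
    nlinarith [mul_le_mul_of_nonneg_left h2 (hW0 ω)]
  set c := Real.exp (l * ρ - l ^ 2 * D ^ 2 / 2) with hc
  have hc0 : 0 < c := Real.exp_pos _
  have h1 : ∫ ω, W ω * Real.exp (-l * (X ω - ρ) - l ^ 2 * D ^ 2 / 2) ∂P ≤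
      ∫ ω, (c * (1 + l ^ 2 * D ^ 2 / 2) * W ω - c * l * (W ω * X ω)) ∂P := by
    refine integral_mono_ae hI ((hWi.const_mul _).sub (hWX.const_mul _)) ?_
    filter_upwards [hX] with ω h
    have a := aux_exp_le (l * X ω) (mul_nonneg hl h.1)
    have b : (l * X ω) ^ 2 ≤ l ^ 2 * D ^ 2 := by
      rw [← mul_pow]; exact pow_le_pow_left₀ (mul_nonneg hl h.1) (mul_le_mul_of_nonneg_left h.2 hl) 2
    have e : Real.exp (-l * (X ω - ρ) - l ^ 2 * D ^ 2 / 2) = c * Real.exp (-(l * X ω)) := by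
      rw [hc, ← Real.exp_add]; ring_nf
    have a' : Real.exp (-(l * X ω)) ≤ 1 - l * X ω + l ^ 2 * D ^ 2 / 2 := by linarith
    show W ω * Real.exp (-l * (X ω - ρ) - l ^ 2 * D ^ 2 / 2) ≤ _
    rw [e]
    have := mul_le_mul_of_nonneg_left a' (mul_nonneg (hW0 ω) hc0.le)
    linarith
  rw [integral_sub (hWi.const_mul _) (hWX.const_mul _), integral_const_mul, integral_const_mul] at h1
  have hw : 0 ≤ ∫ ω, W ω ∂P := integral_nonneg hW0
  have h2 : c * (1 - l * ρ + l ^ 2 * D ^ 2 / 2) ≤ 1 := by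
    have := Real.add_one_le_exp (-(l * ρ - l ^ 2 * D ^ 2 / 2))
    have h3 : c * Real.exp (-(l * ρ - l ^ 2 * D ^ 2 / 2)) = 1 := by
      rw [hc, ← Real.exp_add]; simp
    nlinarith [mul_le_mul_of_nonneg_left this hc0.le]
  have h4 := mul_le_mul_of_nonneg_left key (mul_nonneg hc0.le hl)
  nlinarith [mul_le_mul_of_nonneg_right h2 hw]

/-- The skip-one products. -/
def auxZ {Ω : Type*} (Y : ℕ → Ω → ℝ) : ℕ → Ω → ℝ
  | 0 => fun _ => 1
  | 1 => fun ω => 1 * Y 1 ω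
  | (k + 2) => fun ω => auxZ Y k ω * Y (k + 2) ω

lemma auxZ_prod {Ω : Type*} (Y : ℕ → Ω → ℝ) (ω : Ω) (k : ℕ) :
    auxZ Y k ω * auxZ Y (k + 1) ω = ∏ i ∈ Finset.Icc 1 (k + 1), Y i ω := by
  induction k with
  | zero => simp [auxZ]
  | succ k ih =>
    rw [Finset.prod_Icc_succ_top (by omega), ← ih]
    simp only [auxZ]; ring


/-- **Lemma 5, concentration of the averaged IPM estimates.**
If the single-step estimates `ρ̃ᵢ` satisfy `0 ≤ ρ̃ᵢ ≤ D` a.s., are `𝓚ᵢ`-measurable, and are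
upward biased two steps back, `E[ρ̃ᵢ | 𝓚_{i−2}] ≥ ρ` a.s. (with the convention `𝓚ᵢ = 𝓚₀` for
`i < 0`, realized by truncated subtraction on `ℕ`), then
`P{ (1/n) Σᵢ ρ̃ᵢ < ρ − t } ≤ exp(−n t² / (4D²))` for every `t > 0`. -/
theorem averaged_ipm_estimate_concentration
    {Ω : Type*} {m0 : MeasurableSpace Ω} (P : Measure Ω) [IsProbabilityMeasure P]
    (n : ℕ) (hn : 1 ≤ n)
    (𝒦 : Filtration ℕ m0)
    (ρe : ℕ → Ω → ℝ) (D ρ : ℝ) (hD : 0 < D) (hρ : 0 ≤ ρ)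
    (hbd : ∀ i ∈ Finset.Icc 1 n, ∀ᵐ ω ∂P, 0 ≤ ρe i ω ∧ ρe i ω ≤ D)
    (hmeas : ∀ i ∈ Finset.Icc 1 n, StronglyMeasurable[𝒦 i] (ρe i))
    (hint : ∀ i ∈ Finset.Icc 1 n, Integrable (ρe i) P)
    (hbias : ∀ i ∈ Finset.Icc 1 n, ∀ᵐ ω ∂P, ρ ≤ (P[ρe i|𝒦 (i - 2)]) ω)
    (t : ℝ) (ht : 0 < t) :
    (P {ω | (1 / (n : ℝ)) * ∑ i ∈ Finset.Icc 1 n, ρe i ω < ρ - t}).toReal ≤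
      Real.exp (-(n : ℝ) * t ^ 2 / (4 * D ^ 2)) := by
  set l := t / D ^ 2 with hl
  have hl0 : 0 ≤ l := by positivity
  set Y : ℕ → Ω → ℝ := fun i ω => Real.exp (-l * (ρe i ω - ρ) - l ^ 2 * D ^ 2 / 2) with hY
  have hYc : Continuous (fun x : ℝ => Real.exp (-l * (x - ρ) - l ^ 2 * D ^ 2 / 2)) := by fun_prop
  have hZ : ∀ k, k ≤ n → StronglyMeasurable[𝒦 k] (auxZ Y k) ∧ (∀ ω, 0 ≤ auxZ Y k ω) ∧
      Integrable (auxZ Y k) P ∧ ∫ ω, auxZ Y k ω ∂P ≤ 1 := by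
    intro k
    induction k using Nat.strong_induction_on with
    | _ k ih =>
      intro hk
      match k, ih, hk with
      | 0, _, _ =>
        refine ⟨stronglyMeasurable_const, fun ω => zero_le_one, integrable_const _, ?_⟩
        simp [auxZ]
      | 1, _, hk =>
        have h1 : 1 ∈ Finset.Icc 1 n := Finset.mem_Icc.2 ⟨le_rfl, hk⟩
        have s := aux_step P (𝒦 0) (𝒦.le 0) (fun _ => 1) (ρe 1) D ρ l hl0 stronglyMeasurable_const
          (fun _ => zero_le_one) (integrable_const _) (hbd 1 h1) (hint 1 h1) (hbias 1 h1)
        refine ⟨?_, ?_, s.1, ?_⟩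
        · exact stronglyMeasurable_const.mul (hYc.comp_stronglyMeasurable (hmeas 1 h1))
        · intro ω; exact mul_nonneg zero_le_one (Real.exp_pos _).le
        · refine s.2.trans ?_
          simp
      | k + 2, ih, hk =>
        obtain ⟨a, b, c, d⟩ := ih k (by omega) (by omega)
        have h1 : k + 2 ∈ Finset.Icc 1 n := Finset.mem_Icc.2 ⟨by omega, hk⟩
        have s := aux_step P (𝒦 k) (𝒦.le k) (auxZ Y k) (ρe (k + 2)) D ρ l hl0 a b c
          (hbd _ h1) (hint _ h1) (hbias _ h1)
        refine ⟨?_, ?_, s.1, s.2.trans d⟩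
        · exact (a.mono (𝒦.mono (by omega))).mul (hYc.comp_stronglyMeasurable (hmeas _ h1))
        · intro ω; exact mul_nonneg (b ω) (Real.exp_pos _).le
  obtain ⟨k, rfl⟩ : ∃ k, n = k + 1 := ⟨n - 1, by omega⟩
  obtain ⟨-, b1, c1, d1⟩ := hZ k (by omega)
  obtain ⟨-, b2, c2, d2⟩ := hZ (k + 1) le_rfl
  set N : ℝ := ((k + 1 : ℕ) : ℝ) with hN
  have hN0 : 0 < N := by rw [hN]; positivity
  set E := Real.exp (N * t ^ 2 / (4 * D ^ 2)) with hE
  have hE0 : 0 < E := Real.exp_pos _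
  have hsub : {ω | (1 / N) * ∑ i ∈ Finset.Icc 1 (k + 1), ρe i ω < ρ - t} ⊆
      {ω | E ≤ (auxZ Y k ω + auxZ Y (k + 1) ω) / 2} := by
    intro ω hω
    simp only [Set.mem_setOf_eq] at hω ⊢
    have hs : ∑ i ∈ Finset.Icc 1 (k + 1), ρe i ω < N * (ρ - t) := by
      rw [one_div, inv_mul_lt_iff₀ hN0] at hω; exact hω
    have hp := auxZ_prod Y ω k
    have hp2 : E ^ 2 ≤ ∏ i ∈ Finset.Icc 1 (k + 1), Y i ω := by
      rw [hY, ← Real.exp_sum, hE, ← Real.exp_nat_mul]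
      apply Real.exp_le_exp.2
      rw [Finset.sum_sub_distrib, ← Finset.mul_sum, Finset.sum_sub_distrib]
      simp only [Finset.sum_const, Nat.card_Icc, nsmul_eq_mul, Nat.add_sub_cancel]
      rw [← hN]
      have e : l * D ^ 2 = t := by rw [hl]; field_simp
      have e1 : ((2:ℕ):ℝ) * (N * t ^ 2 / (4 * D ^ 2)) = N * l * t / 2 := by
        rw [hl]; push_cast; field_simp; norm_num
      have e2 : l ^ 2 * D ^ 2 = l * t := by rw [← e]; ring
      rw [e1, e2]
      nlinarith [mul_le_mul_of_nonneg_left hs.le hl0]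
    rw [← hp] at hp2
    by_contra hc
    push Not at hc
    nlinarith [sq_nonneg (auxZ Y k ω - auxZ Y (k + 1) ω), b1 ω, b2 ω]
  have hi : Integrable (fun ω => (auxZ Y k ω + auxZ Y (k + 1) ω) / 2) P := (c1.add c2).div_const 2
  have hmk := mul_meas_ge_le_integral_of_nonneg (μ := P)
    (Filter.Eventually.of_forall (fun ω => by
      have := b1 ω; have := b2 ω; simp only [Pi.zero_apply]; linarith)) hi E
  rw [integral_div, integral_add c1 c2] at hmk
  have hle : P.real {ω | (1 / N) * ∑ i ∈ Finset.Icc 1 (k + 1), ρe i ω < ρ - t} ≤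
      P.real {ω | E ≤ (auxZ Y k ω + auxZ Y (k + 1) ω) / 2} := measureReal_mono hsub
  have e : Real.exp (-N * t ^ 2 / (4 * D ^ 2)) = E⁻¹ := by
    rw [hE, ← Real.exp_neg]; ring_nf
  rw [e]
  refine hle.trans ?_
  rw [← one_div, le_div_iff₀ hE0]
  linarith
end

section
/- Let (Ω, 𝓕, P) be a probability space with a filtration 𝓚₀ ⊆ 𝓚₁ ⊆ ⋯ ⊆ 𝓚ₙ (with the convention 𝓚ᵢ = 𝓚₀ for i < 0), let W ≥ 1 be an integer, and let ρ̃^{(2)}, …, ρ̃^{(n)} be random variables with 0 ≤ ρ̃^{(i)} ≤ D almost surely for a constant D > 0, each ρ̃^{(i)} being 𝓚ᵢ-measurable, and E[ρ̃^{(i)} | 𝓚_{i−W−1}] ≥ ρ almost surely for every i, where ρ ≥ 0. Then for every t > 0, P{ (1/(n−1)) Σ_{i=2}^n ρ̃^{(i)} < ρ − t } ≤ exp(−2(n−1) t² / ((W+1) D²)). -/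
open MeasureTheory

lemma aux_bern (p u : ℝ) (hp0 : 0 ≤ p) (hp1 : p ≤ 1) :
    1 - p + p * Real.exp u ≤ Real.exp (u * p + u ^ 2 / 8) := by
  let μ : Measure ℝ := ENNReal.ofReal (1 - p) • Measure.dirac 0 + ENNReal.ofReal p • Measure.dirac 1
  have hμ : IsProbabilityMeasure μ := ⟨by
    simp only [μ, Measure.coe_add, Measure.coe_smul, Pi.add_apply, Pi.smul_apply, smul_eq_mul,
      measure_univ, mul_one]
    rw [← ENNReal.ofReal_add (by linarith) hp0]; simp⟩
  have hi : ∀ f : ℝ → ℝ, ∫ x, f x ∂μ = (1 - p) * f 0 + p * f 1 := by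
    intro f
    rw [integral_add_measure, integral_smul_measure, integral_smul_measure, integral_dirac,
      integral_dirac, ENNReal.toReal_ofReal (by linarith), ENNReal.toReal_ofReal hp0]
    · rfl
    · exact (integrable_dirac (by simp)).smul_measure (by simp)
    · exact (integrable_dirac (by simp)).smul_measure (by simp)
  have h := ProbabilityTheory.hasSubgaussianMGF_of_mem_Icc (μ := μ) (X := fun x => x) (a := 0) (b := 1)
    aemeasurable_id (by
      simp only [μ]
      rw [ae_add_measure_iff]
      constructor
      · apply Measure.ae_smul_measure
        rw [ae_dirac_eq]; simp
      · apply Measure.ae_smul_measure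
        rw [ae_dirac_eq]; simp)
  have h2 := h.mgf_le u
  simp only [ProbabilityTheory.mgf, hi] at h2
  norm_num at h2
  have e1 : Real.exp (u * p + u ^ 2 / 8) = Real.exp (u * p) * Real.exp (1 / 4 * u ^ 2 / 2) := by
    rw [← Real.exp_add]; congr 1; ring
  rw [e1]
  calc 1 - p + p * Real.exp u
      = Real.exp (u * p) * ((1 - p) * Real.exp (-(u * p)) + p * Real.exp (u * (1 - p))) := by
        have a : Real.exp (u * p) * Real.exp (-(u * p)) = 1 := by rw [← Real.exp_add]; simp
        have b : Real.exp (u * p) * Real.exp (u * (1 - p)) = Real.exp u := by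
          rw [← Real.exp_add]; congr 1; ring
        rw [mul_add, mul_left_comm, a, mul_left_comm, b]; ring
    _ ≤ _ := mul_le_mul_of_nonneg_left (by convert h2 using 2) (Real.exp_pos _).le

lemma aux_convex (D s x : ℝ) (hD : 0 < D) (h0 : 0 ≤ x) (h1 : x ≤ D) :
    Real.exp (-s * x) ≤ 1 - (1 - Real.exp (-s * D)) / D * x := by
  have h := convexOn_exp.2 (Set.mem_univ (0:ℝ)) (Set.mem_univ (-s * D))
    (show 0 ≤ 1 - x / D by rw [sub_nonneg, div_le_one hD]; exact h1) (show 0 ≤ x / D by positivity)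
    (by ring)
  simp only [smul_eq_mul, mul_zero, zero_add, Real.exp_zero, mul_one] at h
  have e : x / D * (-s * D) = -s * x := by field_simp
  rw [e] at h
  refine h.trans (le_of_eq ?_)
  field_simp
  ring

lemma aux_class {Ω : Type*} {m0 : MeasurableSpace Ω} (P : Measure Ω) [IsProbabilityMeasure P]
    (n : ℕ) (W : ℕ) (𝒦 : Filtration ℕ m0)
    (ρe : ℕ → Ω → ℝ) (D ρ : ℝ) (hD : 0 < D) (hρ : 0 ≤ ρ)
    (hbd : ∀ i ∈ Finset.Icc 2 n, ∀ᵐ ω ∂P, 0 ≤ ρe i ω ∧ ρe i ω ≤ D)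
    (hmeas : ∀ i ∈ Finset.Icc 2 n, StronglyMeasurable[𝒦 i] (ρe i))
    (hint : ∀ i ∈ Finset.Icc 2 n, Integrable (ρe i) P)
    (hbias : ∀ i ∈ Finset.Icc 2 n, ∀ᵐ ω ∂P, ρ ≤ (P[ρe i|𝒦 (i - (W + 1))]) ω)
    (s : ℝ) (hs : 0 ≤ s) (S : Finset ℕ) :
    S ⊆ Finset.Icc 2 n → (∀ i ∈ S, ∀ j ∈ S, i < j → i + (W + 1) ≤ j) →
    Integrable (fun ω => Real.exp (∑ i ∈ S, (-s * (ρe i ω - ρ) - s ^ 2 * D ^ 2 / 8))) P ∧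
    ∫ ω, Real.exp (∑ i ∈ S, (-s * (ρe i ω - ρ) - s ^ 2 * D ^ 2 / 8)) ∂P ≤ 1 := by
  induction S using Finset.induction_on_max with
  | empty => intro _ _; simp
  | insert a S hmax ih =>
    intro hsub hsep
    obtain ⟨ihI, ihle⟩ := ih (fun i hi => hsub (Finset.mem_insert_of_mem hi))
      (fun i hi j hj => hsep i (Finset.mem_insert_of_mem hi) j (Finset.mem_insert_of_mem hj))
    have ha := hsub (Finset.mem_insert_self a S)
    have haS : a ∉ S := fun h => (hmax a h).false
    set F : Ω → ℝ := fun ω => Real.exp (∑ i ∈ S, (-s * (ρe i ω - ρ) - s ^ 2 * D ^ 2 / 8)) with hF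
    have hFpos : ∀ ω, 0 ≤ F ω := fun ω => (Real.exp_pos _).le
    have hFm : StronglyMeasurable[𝒦 (a - (W + 1))] F := by
      refine Real.continuous_exp.comp_stronglyMeasurable ?_
      refine Finset.stronglyMeasurable_fun_sum _ fun i hi => ?_
      have hia := hsep i (Finset.mem_insert_of_mem hi) a (Finset.mem_insert_self _ _) (hmax i hi)
      have hm : StronglyMeasurable[𝒦 (a - (W + 1))] (ρe i) :=
        (hmeas i (hsub (Finset.mem_insert_of_mem hi))).mono (𝒦.mono (by omega))
      exact (((hm.sub stronglyMeasurable_const).const_mul (-s)).sub stronglyMeasurable_const)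
    have hXm : AEStronglyMeasurable (ρe a) P := (hint a ha).aestronglyMeasurable
    have hFX : Integrable (fun ω => F ω * ρe a ω) P := by
      refine ihI.mul_bdd (c := D) hXm ?_
      filter_upwards [hbd a ha] with ω h
      rw [Real.norm_eq_abs, abs_of_nonneg h.1]; exact h.2
    have hcond := condExp_mul_of_stronglyMeasurable_left (μ := P) hFm hFX (hint a ha)
    have hFXge : ρ * ∫ ω, F ω ∂P ≤ ∫ ω, F ω * ρe a ω ∂P := by
      rw [← integral_const_mul]
      have e : ∫ ω, F ω * ρe a ω ∂P = ∫ ω, (P[F * ρe a|𝒦 (a - (W + 1))]) ω ∂P :=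
        (integral_condExp (𝒦.le _)).symm
      rw [e]
      refine integral_mono_ae (ihI.const_mul _) integrable_condExp ?_
      filter_upwards [hcond, hbias a ha] with ω h1 h2
      rw [h1, Pi.mul_apply, mul_comm]
      exact mul_le_mul_of_nonneg_left h2 (hFpos ω)
    have hρD : ρ ≤ D := by
      have h1 : ρ ≤ ∫ ω, (P[ρe a|𝒦 (a - (W + 1))]) ω ∂P := by
        have := integral_mono_ae (integrable_const (μ := P) ρ) integrable_condExp (hbias a ha)
        simpa using this
      rw [integral_condExp (𝒦.le _)] at h1
      have h2 : ∫ ω, ρe a ω ∂P ≤ D := by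
        have := integral_mono_ae (hint a ha) (integrable_const (μ := P) D)
          ((hbd a ha).mono fun ω h => h.2)
        simpa using this
      linarith
    have hsum : ∀ ω, Real.exp (∑ i ∈ insert a S, (-s * (ρe i ω - ρ) - s ^ 2 * D ^ 2 / 8))
        = F ω * Real.exp (-s * (ρe a ω - ρ) - s ^ 2 * D ^ 2 / 8) := by
      intro ω
      rw [Finset.sum_insert haS, add_comm, Real.exp_add]
    simp only [hsum]
    set A := Real.exp (s * ρ - s ^ 2 * D ^ 2 / 8) with hA
    set c := (1 - Real.exp (-s * D)) / D with hc
    have hc0 : 0 ≤ c := by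
      apply div_nonneg _ hD.le
      rw [sub_nonneg]; apply Real.exp_le_one_iff.2; nlinarith
    have hAc : A * (1 - c * ρ) ≤ 1 := by
      have := aux_bern (ρ / D) (-s * D) (by positivity) ((div_le_one hD).2 hρD)
      have e : 1 - ρ / D + ρ / D * Real.exp (-s * D) = 1 - c * ρ := by
        rw [hc]; field_simp; ring
      rw [e] at this
      calc _ ≤ A * _ := mul_le_mul_of_nonneg_left this (Real.exp_pos _).le
        _ = 1 := by
          rw [hA, ← Real.exp_add, Real.exp_eq_one_iff]; field_simp; ring
    have hI : Integrable
        (fun ω => F ω * Real.exp (-s * (ρe a ω - ρ) - s ^ 2 * D ^ 2 / 8)) P := by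
      refine ihI.mul_bdd (c := Real.exp (s * ρ)) ?_ ?_
      · exact Real.continuous_exp.comp_aestronglyMeasurable
          (((hXm.sub aestronglyMeasurable_const).const_mul (-s)).sub aestronglyMeasurable_const)
      · filter_upwards [hbd a ha] with ω h
        rw [Real.norm_eq_abs, Real.abs_exp]
        apply Real.exp_le_exp.2
        have := mul_nonneg hs h.1
        nlinarith [sq_nonneg (s * D)]
    refine ⟨hI, ?_⟩
    have hF0 : 0 ≤ ∫ ω, F ω ∂P := integral_nonneg hFpos
    calc _ ≤ ∫ ω, (A * F ω - A * c * (F ω * ρe a ω)) ∂P := by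
          refine integral_mono_ae hI ((ihI.const_mul _).sub (hFX.const_mul _)) ?_
          filter_upwards [hbd a ha] with ω h
          have h1 := aux_convex D s (ρe a ω) hD h.1 h.2
          have e : Real.exp (-s * (ρe a ω - ρ) - s ^ 2 * D ^ 2 / 8)
              = A * Real.exp (-s * ρe a ω) := by
            rw [hA, ← Real.exp_add]; congr 1; ring
          rw [e]
          have h2 := mul_le_mul_of_nonneg_left h1 (mul_nonneg (hFpos ω) (Real.exp_pos _ : 0 < A).le)
          calc _ = F ω * A * Real.exp (-s * ρe a ω) := by ring
            _ ≤ _ := h2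
            _ = _ := by rw [← hc]; ring
      _ = A * ∫ ω, F ω ∂P - A * c * ∫ ω, F ω * ρe a ω ∂P := by
          rw [integral_sub (ihI.const_mul _) (hFX.const_mul _), integral_const_mul,
            integral_const_mul]
      _ ≤ A * ∫ ω, F ω ∂P - A * c * (ρ * ∫ ω, F ω ∂P) := by
          have := mul_le_mul_of_nonneg_left hFXge (mul_nonneg (Real.exp_pos _ : 0 < A).le hc0)
          linarith
      _ = (A * (1 - c * ρ)) * ∫ ω, F ω ∂P := by ring
      _ ≤ 1 * ∫ ω, F ω ∂P := mul_le_mul_of_nonneg_right hAc hF0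
      _ ≤ 1 := by linarith


/-- **Lemma 6, concentration of windowed estimates, bounded-change case.**
If the windowed estimates `ρ̃^{(i)}` (for `i = 2, …, n`) satisfy `0 ≤ ρ̃^{(i)} ≤ D` a.s., are
`𝓚ᵢ`-measurable, and are upward biased `W+1` steps back, `E[ρ̃^{(i)} | 𝓚_{i−W−1}] ≥ ρ` a.s.
(with the convention `𝓚ᵢ = 𝓚₀` for `i < 0`, realized by truncated subtraction on `ℕ`), then
`P{ (1/(n−1)) Σ_{i=2}^n ρ̃^{(i)} < ρ − t } ≤ exp(−2(n−1) t² / ((W+1) D²))` for every `t > 0`. -/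
theorem averaged_windowed_ipm_estimate_concentration
    {Ω : Type*} {m0 : MeasurableSpace Ω} (P : Measure Ω) [IsProbabilityMeasure P]
    (n : ℕ) (hn : 2 ≤ n) (W : ℕ) (hW : 1 ≤ W)
    (𝒦 : Filtration ℕ m0)
    (ρe : ℕ → Ω → ℝ) (D ρ : ℝ) (hD : 0 < D) (hρ : 0 ≤ ρ)
    (hbd : ∀ i ∈ Finset.Icc 2 n, ∀ᵐ ω ∂P, 0 ≤ ρe i ω ∧ ρe i ω ≤ D)
    (hmeas : ∀ i ∈ Finset.Icc 2 n, StronglyMeasurable[𝒦 i] (ρe i))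
    (hint : ∀ i ∈ Finset.Icc 2 n, Integrable (ρe i) P)
    (hbias : ∀ i ∈ Finset.Icc 2 n, ∀ᵐ ω ∂P, ρ ≤ (P[ρe i|𝒦 (i - (W + 1))]) ω)
    (t : ℝ) (ht : 0 < t) :
    (P {ω | (1 / ((n : ℝ) - 1)) * ∑ i ∈ Finset.Icc 2 n, ρe i ω < ρ - t}).toReal ≤
      Real.exp (-2 * ((n : ℝ) - 1) * t ^ 2 / ((W + 1) * D ^ 2)) := by

  have hn1 : (0 : ℝ) < (n : ℝ) - 1 := by
    have : (2 : ℝ) ≤ n := by exact_mod_cast hn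
    linarith
  set M : ℝ := (W : ℝ) + 1 with hM
  have hMpos : 0 < M := by positivity
  set s : ℝ := 4 * t / D ^ 2 with hs
  have hs0 : 0 ≤ s := by positivity
  let y : ℕ → Ω → ℝ := fun i ω => -s * (ρe i ω - ρ) - s ^ 2 * D ^ 2 / 8
  let C : ℕ → Finset ℕ := fun j => (Finset.Icc 2 n).filter (fun i => i % (W + 1) = j)
  have hcl : ∀ j, Integrable (fun ω => Real.exp (∑ i ∈ C j, y i ω)) P ∧
      ∫ ω, Real.exp (∑ i ∈ C j, y i ω) ∂P ≤ 1 := by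
    intro j
    refine aux_class P n W 𝒦 ρe D ρ hD hρ hbd hmeas hint hbias s hs0 (C j)
      (Finset.filter_subset _ _) ?_
    intro i hi k hk hik
    have h1 := (Finset.mem_filter.1 hi).2
    have h2 := (Finset.mem_filter.1 hk).2
    have h3 : (W + 1) ∣ k - i := (Nat.modEq_iff_dvd' hik.le).1 (h1.trans h2.symm)
    have := Nat.le_of_dvd (by omega) h3
    omega
  let G : Ω → ℝ := fun ω => ∑ j ∈ Finset.range (W + 1), M⁻¹ * Real.exp (∑ i ∈ C j, y i ω)
  have hGI : Integrable G P := integrable_finsetSum _ fun j _ => (hcl j).1.const_mul _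
  have hG1 : ∫ ω, G ω ∂P ≤ 1 := by
    rw [integral_finsetSum _ fun j _ => (hcl j).1.const_mul _]
    calc _ ≤ ∑ j ∈ Finset.range (W + 1), M⁻¹ := by
          refine Finset.sum_le_sum fun j _ => ?_
          rw [integral_const_mul]
          exact mul_le_of_le_one_right (by positivity) (hcl j).2
      _ = 1 := by
          rw [Finset.sum_const, Finset.card_range, nsmul_eq_mul]
          push_cast
          exact mul_inv_cancel₀ hMpos.ne'
  have hGexp : ∀ ω, Real.exp (M⁻¹ * ∑ i ∈ Finset.Icc 2 n, y i ω) ≤ G ω := by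
    intro ω
    have h := convexOn_exp.map_sum_le (t := Finset.range (W + 1)) (w := fun _ => M⁻¹)
      (p := fun j => ∑ i ∈ C j, y i ω) (fun _ _ => by positivity)
      (by
        rw [Finset.sum_const, Finset.card_range, nsmul_eq_mul]
        push_cast
        exact mul_inv_cancel₀ hMpos.ne') (fun _ _ => Set.mem_univ _)
    simp only [smul_eq_mul] at h
    rw [← Finset.mul_sum] at h
    have e : ∑ j ∈ Finset.range (W + 1), ∑ i ∈ C j, y i ω = ∑ i ∈ Finset.Icc 2 n, y i ω :=
      Finset.sum_fiberwise_of_maps_to (fun i _ => Finset.mem_range.2 (Nat.mod_lt _ (by omega))) _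
    rw [e] at h
    exact h
  set K : ℝ := 2 * ((n : ℝ) - 1) * t ^ 2 / (M * D ^ 2) with hK
  have hsub : {ω | (1 / ((n : ℝ) - 1)) * ∑ i ∈ Finset.Icc 2 n, ρe i ω < ρ - t} ⊆
      {ω | Real.exp K ≤ G ω} := by
    intro ω hω
    simp only [Set.mem_ofPred_eq] at hω ⊢
    refine le_trans (Real.exp_le_exp.2 ?_) (hGexp ω)
    have hlt : ∑ i ∈ Finset.Icc 2 n, ρe i ω < ((n : ℝ) - 1) * (ρ - t) := by
      rw [one_div, inv_mul_lt_iff₀ hn1] at hω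
      exact hω
    have hcard : ((Finset.Icc 2 n).card : ℝ) = (n : ℝ) - 1 := by
      rw [Nat.card_Icc, Nat.cast_sub (by omega)]; push_cast; ring
    have e : ∑ i ∈ Finset.Icc 2 n, y i ω
        = -s * (∑ i ∈ Finset.Icc 2 n, ρe i ω - ((n : ℝ) - 1) * ρ)
          - ((n : ℝ) - 1) * (s ^ 2 * D ^ 2 / 8) := by
      simp only [y]
      rw [Finset.sum_sub_distrib, ← Finset.mul_sum, Finset.sum_sub_distrib, Finset.sum_const,
        Finset.sum_const, nsmul_eq_mul, nsmul_eq_mul, hcard]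
    have e2 : K = M⁻¹ * (s * (((n : ℝ) - 1) * t) - ((n : ℝ) - 1) * (s ^ 2 * D ^ 2 / 8)) := by
      rw [hK, hs]; field_simp; ring
    rw [e, e2]
    refine mul_le_mul_of_nonneg_left ?_ (by positivity)
    nlinarith [mul_le_mul_of_nonneg_left hlt.le hs0]
  have hmarkov := mul_meas_ge_le_integral_of_nonneg (μ := P) (f := G)
    (Filter.Eventually.of_forall fun ω => (Real.exp_pos _).le.trans (hGexp ω)) hGI (Real.exp K)
  have hle : P.real {ω | (1 / ((n : ℝ) - 1)) * ∑ i ∈ Finset.Icc 2 n, ρe i ω < ρ - t} ≤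
      P.real {ω | Real.exp K ≤ G ω} := measureReal_mono hsub
  have hfin : P.real {ω | Real.exp K ≤ G ω} ≤ Real.exp (-K) := by
    rw [Real.exp_neg, ← one_div, le_div_iff₀ (Real.exp_pos _), mul_comm]
    exact hmarkov.trans hG1
  refine (hle.trans hfin).trans (le_of_eq ?_)
  congr 1
  rw [hK]; ring
end

section
/- Fix constants m > 0, ρ > 0, α > 0, and β ≥ 0, and define φ : [0, ∞) → ℝ by φ(v) = α(√(2v/m) + ρ)² + β. Suppose there exists ε > 0 with φ(ε) ≤ ε. Then: (i) 2α/m < 1; (ii) φ has a unique positive fixed point v̄ (i.e., a unique v̄ > 0 with φ(v̄) = v̄); (iii) v̄ ≤ ε; and (iv) the derivative satisfies φ′(v̄) < 1. -/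
theorem mean_gap_aux (c b k s e : ℝ) (hc : 0 < c) (hk : 0 < k) (hs : 0 < s) (he : 0 < e)
    (h1 : c * s ^ 2 = b * s + k) (h2 : b * e + k ≤ c * e ^ 2) : s ≤ e := by
  by_contra h
  push Not at h
  have h3 : 0 < (s - e) * (c * s * e + k) := by
    have : 0 < s - e := by linarith
    positivity
  have h4 : s * (b * e + k) ≤ s * (c * e ^ 2) := mul_le_mul_of_nonneg_left h2 hs.le
  have h5 : e * (c * s ^ 2) = e * (b * s + k) := by rw [h1]
  nlinarith

/-- **fixed-point lemma, Lemma 7.** For `φ(v) = α(√(2v/m) + ρ)² + β`, if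
`φ(ε) ≤ ε` for some `ε > 0`, then `2α/m < 1`, `φ` has a unique positive fixed point `v̄`,
and every positive fixed point `v̄` satisfies `v̄ ≤ ε` and `φ′(v̄) < 1`. -/
theorem mean_gap_map_fixed_point
    (m ρ α β ε : ℝ) (hm : 0 < m) (hρ : 0 < ρ) (hα : 0 < α) (hβ : 0 ≤ β) (hε : 0 < ε)
    (φ : ℝ → ℝ)
    (hφ : ∀ v : ℝ, φ v = α * (Real.sqrt (2 * v / m) + ρ) ^ 2 + β)
    (hfix : φ ε ≤ ε) :
    2 * α / m < 1 ∧
      (∃! v : ℝ, 0 < v ∧ φ v = v) ∧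
      (∀ v : ℝ, 0 < v → φ v = v → v ≤ ε ∧ deriv φ v < 1) := by
  have hpos : ∀ v : ℝ, 0 < v → 0 < Real.sqrt (2 * v / m) := fun v hv =>
    Real.sqrt_pos.2 (by positivity)
  have hsq : ∀ v : ℝ, 0 < v → v = m / 2 * Real.sqrt (2 * v / m) ^ 2 := fun v hv => by
    rw [Real.sq_sqrt (by positivity)]; field_simp
  have hk : 0 < α * ρ ^ 2 + β := by positivity
  have hle : ∀ v : ℝ, 0 < v → φ v ≤ v → 2 * α * ρ * Real.sqrt (2 * v / m) + (α * ρ ^ 2 + β)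
      ≤ (m / 2 - α) * Real.sqrt (2 * v / m) ^ 2 := fun v hv h => by
    have h1 := hsq v hv
    rw [hφ] at h
    linarith
  have hge : ∀ v : ℝ, 0 < v → v ≤ φ v → (m / 2 - α) * Real.sqrt (2 * v / m) ^ 2 ≤
      2 * α * ρ * Real.sqrt (2 * v / m) + (α * ρ ^ 2 + β) := fun v hv h => by
    have h1 := hsq v hv
    rw [hφ] at h
    linarith
  have hc : 0 < m / 2 - α := by
    have h1 := hle ε hε hfix
    have h2 := hpos ε hε
    have h3 : 0 < 2 * α * ρ * Real.sqrt (2 * ε / m) := by positivity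
    exact pos_of_mul_pos_left (lt_of_lt_of_le (by linarith) h1) (by positivity)
  have hcmp : ∀ v w : ℝ, 0 < v → φ v = v → 0 < w → φ w ≤ w → v ≤ w := by
    intro v w hv h hw h'
    have h1 := mean_gap_aux _ _ _ _ _ hc hk (hpos v hv) (hpos w hw)
      (le_antisymm (hge v hv h.ge) (hle v hv h.le)) (hle w hw h')
    rw [hsq v hv, hsq w hw]
    have := hpos v hv
    gcongr
  refine ⟨by rw [div_lt_one hm]; linarith, ?_, ?_⟩
  · set c := m / 2 - α with hcd
    set k := α * ρ ^ 2 + β with hkd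
    set D := Real.sqrt ((α * ρ) ^ 2 + c * k) with hD
    have hD2 : D ^ 2 = (α * ρ) ^ 2 + c * k := Real.sq_sqrt (by positivity)
    have hD0 : 0 ≤ D := Real.sqrt_nonneg _
    obtain ⟨s, hs⟩ : ∃ s, s = (α * ρ + D) / c := ⟨_, rfl⟩
    have hs0 : 0 < s := by rw [hs]; positivity
    have hq : c * s ^ 2 = 2 * α * ρ * s + k := by
      rw [hs]; field_simp; linear_combination hD2
    have hv0 : 0 < m / 2 * s ^ 2 := by positivity
    have hfx : φ (m / 2 * s ^ 2) = m / 2 * s ^ 2 := by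
      have : 2 * (m / 2 * s ^ 2) / m = s ^ 2 := by field_simp
      rw [hφ, this, Real.sqrt_sq hs0.le]
      rw [hcd, hkd] at hq
      linarith
    refine ⟨m / 2 * s ^ 2, ⟨hv0, hfx⟩, ?_⟩
    rintro w ⟨hw, hw'⟩
    exact le_antisymm (hcmp _ _ hw hw' hv0 hfx.le) (hcmp _ _ hv0 hfx hw hw'.le)
  · intro v hv h
    refine ⟨hcmp v ε hv h hε hfix, ?_⟩
    have hs := hpos v hv
    have hq := hle v hv h.le
    have hne : 2 * v / m ≠ 0 := by positivity
    have hd : HasDerivAt φ (α * (2 * (Real.sqrt (2 * v / m) + ρ) *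
        ((2 / m) / (2 * Real.sqrt (2 * v / m))))) v := by
      have h0 : HasDerivAt (fun v : ℝ => 2 * v / m) (2 / m) v := by
        simpa using ((hasDerivAt_id v).const_mul 2).div_const m
      have h1 := ((((h0.sqrt hne).add_const ρ).pow 2).const_mul α).add_const β
      have : φ = fun v => α * (Real.sqrt (2 * v / m) + ρ) ^ 2 + β := funext hφ
      rw [this]
      refine HasDerivAt.congr_deriv (f' := _) h1 ?_
      norm_num
    rw [hd.deriv]
    generalize Real.sqrt (2 * v / m) = s at *
    have h3 : 2 * α * ρ < (m / 2 - α) * s := by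
      by_contra hcon
      push Not at hcon
      have := mul_le_mul_of_nonneg_right hcon hs.le
      linarith
    have h4 : 0 < α * ρ := by positivity
    have : α * (2 * (s + ρ) * (2 / m / (2 * s))) = (2 * α * (s + ρ)) / (m * s) := by
      field_simp
    rw [this, div_lt_one (by positivity)]
    linarith
end

section
/- Fix constants m > 0, ρ > 0, α > 0, and β ≥ 0, define φ : [0, ∞) → ℝ by φ(v) = α(√(2v/m) + ρ)² + β, and suppose there exists ε > 0 with φ(ε) ≤ ε. Let v̄ be the unique positive fixed point of φ. Then for every v > 0, the iterates φ^{(n)}(v) (the n-fold composition of φ applied to v) converge to v̄ as n → ∞. -/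
open Filter

/-- **fixed-point iteration, Lemma 8.** For `φ(v) = α(√(2v/m) + ρ)² + β` with
`φ(ε) ≤ ε` for some `ε > 0`, the iterates `φ^[n] v` converge to the unique positive fixed
point `v̄` from every starting point `v > 0`. -/
theorem mean_gap_map_iterates_tendsto_fixed_point
    (m ρ α β ε : ℝ) (hm : 0 < m) (hρ : 0 < ρ) (hα : 0 < α) (hβ : 0 ≤ β) (hε : 0 < ε)
    (φ : ℝ → ℝ)
    (hφ : ∀ v : ℝ, φ v = α * (Real.sqrt (2 * v / m) + ρ) ^ 2 + β)
    (hfix : φ ε ≤ ε)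
    (vbar : ℝ) (hvbar_pos : 0 < vbar) (hvbar_fix : φ vbar = vbar) :
    ∀ v : ℝ, 0 < v → Tendsto (fun n : ℕ => φ^[n] v) atTop (nhds vbar) := by
  intro v hv
  have ht : 0 < Real.sqrt (2 * vbar / m) := Real.sqrt_pos.mpr (by positivity)
  have ht2 : m * Real.sqrt (2 * vbar / m) ^ 2 = 2 * vbar := by
    rw [Real.sq_sqrt (by positivity)]; field_simp
  have hfx := hvbar_fix
  rw [hφ] at hfx
  set t := Real.sqrt (2 * vbar / m) with htdef
  obtain ⟨q, hq⟩ : ∃ q, q = 2 * α * (t + 2 * ρ) / (m * t) := ⟨_, rfl⟩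
  have hq0 : 0 ≤ q := by rw [hq]; positivity
  have hq1 : q < 1 := by
    rw [hq, div_lt_one (by positivity)]
    have h1 : 0 < α * ρ ^ 2 := by positivity
    have h2 : t * (2 * α * (t + 2 * ρ)) < t * (m * t) := by nlinarith
    exact lt_of_mul_lt_mul_left h2 ht.le
  have key : ∀ w : ℝ, 0 ≤ w → |φ w - vbar| ≤ q * |w - vbar| := by
    intro w hw
    have hs : 0 ≤ Real.sqrt (2 * w / m) := Real.sqrt_nonneg _
    have hs2 : m * Real.sqrt (2 * w / m) ^ 2 = 2 * w := by
      rw [Real.sq_sqrt (by positivity)]; field_simp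
    rw [hφ]
    set s := Real.sqrt (2 * w / m)
    have e1 : α * (s + ρ) ^ 2 + β - vbar = (α * (s + t + 2 * ρ)) * (s - t) := by
      rw [← hfx]; ring
    have e2 : w - vbar = (m / 2 * (s + t)) * (s - t) := by linarith
    rw [e1, e2, abs_mul _ (s - t), abs_mul (m / 2 * (s + t)) (s - t), ← mul_assoc, abs_of_nonneg (by positivity : 0 ≤ α * (s + t + 2 * ρ)),
      abs_of_nonneg (by positivity : 0 ≤ m / 2 * (s + t))]
    apply mul_le_mul_of_nonneg_right _ (abs_nonneg _)
    have e3 : q * (m / 2 * (s + t)) = α * (s + t + 2 * ρ) + 2 * α * ρ * s / t := by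
      rw [hq]; field_simp; ring
    rw [e3]
    have : 0 ≤ 2 * α * ρ * s / t := by positivity
    linarith
  have hpos : ∀ n : ℕ, 0 ≤ φ^[n] v := by
    intro n
    cases n with
    | zero => exact hv.le
    | succ n => rw [Function.iterate_succ_apply', hφ]; positivity
  have hb : ∀ n : ℕ, |φ^[n] v - vbar| ≤ q ^ n * |v - vbar| := by
    intro n
    induction n with
    | zero => simp
    | succ n ih =>
      rw [Function.iterate_succ_apply', pow_succ', mul_assoc]
      exact (key _ (hpos n)).trans (mul_le_mul_of_nonneg_left ih hq0)
  rw [tendsto_iff_dist_tendsto_zero]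
  have hlim : Tendsto (fun n : ℕ => q ^ n * |v - vbar|) atTop (nhds 0) := by
    simpa using (tendsto_pow_atTop_nhds_zero_of_lt_one hq0 hq1).mul_const |v - vbar|
  exact squeeze_zero (fun _ => dist_nonneg) (fun n => by rw [Real.dist_eq]; exact hb n) hlim
end

section
/- Fix constants m > 0, ρ > 0, α > 0, and β ≥ 0, define φ : [0, ∞) → ℝ by φ(v) = α(√(2v/m) + ρ)² + β, suppose there exists ε > 0 with φ(ε) ≤ ε, and let v̄ be the unique positive fixed point of φ. Let (xₙ)_{n≥1} be a sequence of nonnegative reals such that for some index N, xₙ ≤ φ(x_{n−1}) for all n ≥ N. Then limsup_{n→∞} xₙ ≤ v̄ ≤ ε. -/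
open Filter

/-- **deterministic limsup bound.** For `φ(v) = α(√(2v/m) + ρ)² + β` with
`φ(ε) ≤ ε` for some `ε > 0` and unique positive fixed point `v̄`, any sequence of
nonnegative reals eventually satisfying `xₙ ≤ φ(x_{n−1})` has `limsup xₙ ≤ v̄ ≤ ε`. -/
theorem eventually_recursion_limsup_le_fixed_point
    (m ρ α β ε : ℝ) (hm : 0 < m) (hρ : 0 < ρ) (hα : 0 < α) (hβ : 0 ≤ β) (hε : 0 < ε)
    (φ : ℝ → ℝ)
    (hφ : ∀ v : ℝ, φ v = α * (Real.sqrt (2 * v / m) + ρ) ^ 2 + β)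
    (hfix : φ ε ≤ ε)
    (vbar : ℝ) (hvbar_pos : 0 < vbar) (hvbar_fix : φ vbar = vbar)
    (x : ℕ → ℝ) (hx : ∀ n, 0 ≤ x n)
    (hrec : ∃ N : ℕ, ∀ n : ℕ, N ≤ n → x (n + 1) ≤ φ (x n)) :
    limsup x atTop ≤ vbar ∧ vbar ≤ ε := by
  obtain ⟨N, hN⟩ := hrec
  have key : ∃ q : ℝ, 0 ≤ q ∧ q < 1 ∧ ∀ v, 0 ≤ v → ∃ r, 0 ≤ r ∧ r ≤ q ∧
      φ v - vbar = r * (v - vbar) := by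
    have hc : 0 < Real.sqrt (2 / m) := Real.sqrt_pos.2 (by positivity)
    have hs : 0 < Real.sqrt vbar := Real.sqrt_pos.2 hvbar_pos
    have hs2 : Real.sqrt vbar ^ 2 = vbar := Real.sq_sqrt hvbar_pos.le
    have hform : ∀ v, φ v = α * (Real.sqrt (2 / m) * Real.sqrt v + ρ) ^ 2 + β := by
      intro v
      rw [hφ, ← Real.sqrt_mul (by positivity), div_mul_eq_mul_div]
    generalize Real.sqrt (2 / m) = c at hc hform
    have hb := hform vbar
    rw [hvbar_fix] at hb
    generalize Real.sqrt vbar = s at hs hs2 hb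
    refine ⟨α * c ^ 2 + 2 * α * c * ρ / s, by positivity, ?_, ?_⟩
    · have h1 : (α * c ^ 2 + 2 * α * c * ρ / s) * s ^ 2 < 1 * s ^ 2 := by
        have h2 : (α * c ^ 2 + 2 * α * c * ρ / s) * s ^ 2
            = α * (c * s + ρ) ^ 2 - α * ρ ^ 2 := by
          field_simp
          ring
        have h3 : 0 < α * ρ ^ 2 := by positivity
        rw [h2]
        linarith
      exact lt_of_mul_lt_mul_right h1 (by positivity)
    · intro v hv
      have ht : 0 ≤ Real.sqrt v := Real.sqrt_nonneg v
      have ht2 : Real.sqrt v ^ 2 = v := Real.sq_sqrt hv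
      have hv' := hform v
      generalize Real.sqrt v = t at ht ht2 hv'
      refine ⟨α * c ^ 2 + 2 * α * c * ρ / (t + s), by positivity, ?_, ?_⟩
      · gcongr
        linarith
      · have h4 : φ v - vbar = α * (c * t + ρ) ^ 2 - α * (c * s + ρ) ^ 2 := by linarith
        rw [h4, ← ht2, ← hs2]
        have : t + s ≠ 0 := by positivity
        field_simp
        ring
  obtain ⟨q, hq0, hq1, hq⟩ := key
  constructor
  · have hstep : ∀ k : ℕ, x (N + k) ≤ vbar + q ^ k * max (x N - vbar) 0 := by
      intro k
      induction k with
      | zero => simp; linarith [le_max_left (x N - vbar) 0]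
      | succ k ih =>
        have h1 := hN (N + k) (by omega)
        obtain ⟨r, hr0, hrq, hr⟩ := hq _ (hx (N + k))
        have hM : 0 ≤ q ^ k * max (x N - vbar) 0 := by positivity
        have h2 : r * (x (N + k) - vbar) ≤ r * (q ^ k * max (x N - vbar) 0) :=
          mul_le_mul_of_nonneg_left (by linarith) hr0
        have h3 := mul_le_mul_of_nonneg_right hrq hM
        have h4 : q ^ (k + 1) * max (x N - vbar) 0 = q * (q ^ k * max (x N - vbar) 0) := by ring
        rw [h4]
        have h5 : x (N + (k + 1)) ≤ φ (x (N + k)) := h1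
        linarith
    have hlim : Tendsto (fun k : ℕ => vbar + q ^ k * max (x N - vbar) 0) atTop (nhds vbar) := by
      simpa using ((tendsto_pow_atTop_nhds_zero_of_lt_one hq0 hq1).mul_const
        (max (x N - vbar) 0)).const_add vbar
    have hcob : IsCoboundedUnder (· ≤ ·) atTop x :=
      IsBoundedUnder.isCoboundedUnder_le (isBoundedUnder_of ⟨0, hx⟩)
    refine le_of_forall_gt_imp_ge_of_dense fun a ha => ?_
    refine limsup_le_of_le hcob ?_
    obtain ⟨K, hK⟩ := eventually_atTop.1 (hlim.eventually_lt_const ha)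
    filter_upwards [eventually_ge_atTop (N + K)] with n hn
    obtain ⟨j, rfl⟩ := Nat.exists_eq_add_of_le (show N ≤ n by omega)
    exact (hstep j).trans (hK j (by omega)).le
  · by_contra! h
    obtain ⟨r, hr0, hrq, hr⟩ := hq ε hε.le
    nlinarith [mul_pos (show 0 < 1 - r by linarith) (sub_pos.2 h)]
end

section
/- Fix constants m > 0, ρ > 0, α > 0, and β ≥ 0, define φ : [0, ∞) → ℝ by φ(v) = α(√(2v/m) + ρ)² + β, and suppose there exists ε > 0 with φ(ε) ≤ ε. Let (Ω, 𝓕, P) be a probability space and let (Xₙ)_{n≥1} be random variables with 0 ≤ Xₙ ≤ C almost surely for a constant C, such that almost surely there exists a (random) index N with Xₙ ≤ φ(X_{n−1}) for all n ≥ N. Then limsup_{n→∞} E[Xₙ] ≤ ε. -/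
open MeasureTheory Filter

theorem contraction_aux (m ρ α β ε : ℝ) (hm : 0 < m) (hρ : 0 < ρ) (hα : 0 < α) (hβ : 0 ≤ β)
    (hε : 0 < ε) (φ : ℝ → ℝ)
    (hφ : ∀ v : ℝ, φ v = α * (Real.sqrt (2 * v / m) + ρ) ^ 2 + β)
    (hfix : φ ε ≤ ε) :
    ∃ κ : ℝ, 0 ≤ κ ∧ κ < 1 ∧ ∀ x y : ℝ, y ≤ φ x → max (y - ε) 0 ≤ κ * max (x - ε) 0 := by
  have ht : 0 < Real.sqrt (2 * ε / m) := Real.sqrt_pos.2 (by positivity)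
  have ht2 : Real.sqrt (2 * ε / m) ^ 2 = 2 * ε / m := Real.sq_sqrt (by positivity)
  have hfe := hφ ε
  set t := Real.sqrt (2 * ε / m) with htdef
  have hεt : ε = m / 2 * t ^ 2 := by rw [ht2]; field_simp
  have hk : 0 ≤ α * (t + 2 * ρ) * t / ε := by positivity
  refine ⟨α * (t + 2 * ρ) * t / ε, hk, ?_, ?_⟩
  · rw [div_lt_one hε]
    have : 0 < α * ρ ^ 2 := by positivity
    nlinarith
  · intro x y hy
    rcases le_total x ε with hx | hx
    · have hr : Real.sqrt (2 * x / m) ≤ t := Real.sqrt_le_sqrt (by gcongr)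
      have hr0 := Real.sqrt_nonneg (2 * x / m)
      have h1 : φ x ≤ φ ε := by
        rw [hφ x, hfe]; gcongr
      rw [max_eq_right (by linarith), max_eq_right (by linarith)]; simp
    · have hr : t ≤ Real.sqrt (2 * x / m) := Real.sqrt_le_sqrt (by gcongr)
      have hr2 : Real.sqrt (2 * x / m) ^ 2 = 2 * x / m := Real.sq_sqrt (by
        have : 0 ≤ x := by linarith
        positivity)
      have hfx := hφ x
      set r := Real.sqrt (2 * x / m)
      have hxr : x = m / 2 * r ^ 2 := by rw [hr2]; field_simp
      rw [max_eq_left (a := x - ε) (by linarith)]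
      refine max_le ?_ (mul_nonneg hk (by linarith))
      have e : α * (t + 2 * ρ) * t / ε * (x - ε) = α * (t + 2 * ρ) * (r ^ 2 - t ^ 2) / t := by
        rw [hxr, hεt]; field_simp
      rw [e, le_div_iff₀ ht]
      have h2 : y - ε ≤ α * (r - t) * (r + t + 2 * ρ) := by nlinarith
      have h3 : 0 ≤ α * (r - t) * (2 * ρ * r) := by
        have : 0 ≤ r - t := by linarith
        have : 0 ≤ r := by linarith
        positivity
      nlinarith [mul_le_mul_of_nonneg_right h2 ht.le]

/-- **mean-gap control, Theorem of Section 4.** For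
`φ(v) = α(√(2v/m) + ρ)² + β` with `φ(ε) ≤ ε` for some `ε > 0`, if the random variables
`Xₙ` are uniformly bounded in `[0, C]` a.s. and almost surely eventually satisfy the
recursion `X_{n+1} ≤ φ(Xₙ)` (from some random index on), then
`limsup_{n→∞} E[Xₙ] ≤ ε`. -/
theorem eventually_recursion_limsup_expectation_le
    (m ρ α β ε : ℝ) (hm : 0 < m) (hρ : 0 < ρ) (hα : 0 < α) (hβ : 0 ≤ β) (hε : 0 < ε)
    (φ : ℝ → ℝ)
    (hφ : ∀ v : ℝ, φ v = α * (Real.sqrt (2 * v / m) + ρ) ^ 2 + β)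
    (hfix : φ ε ≤ ε)
    {Ω : Type*} [MeasurableSpace Ω] (P : Measure Ω) [IsProbabilityMeasure P]
    (X : ℕ → Ω → ℝ) (C : ℝ)
    (hint : ∀ n, Integrable (X n) P)
    (hbd : ∀ n, ∀ᵐ ω ∂P, 0 ≤ X n ω ∧ X n ω ≤ C)
    (hrec : ∀ᵐ ω ∂P, ∃ N : ℕ, ∀ n : ℕ, N ≤ n → X (n + 1) ω ≤ φ (X n ω)) :
    limsup (fun n => ∫ ω, X n ω ∂P) atTop ≤ ε := by
  obtain ⟨κ, hk0, hk1, hκ⟩ := contraction_aux m ρ α β ε hm hρ hα hβ hε φ hφ hfix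
  have hY : ∀ n, Integrable (fun ω => max (X n ω - ε) 0) P := fun n =>
    ((hint n).sub (integrable_const ε)).pos_part
  have hlim : Tendsto (fun n => ∫ ω, max (X n ω - ε) 0 ∂P) atTop (nhds (∫ _, (0 : ℝ) ∂P)) := by
    refine tendsto_integral_of_dominated_convergence (fun _ => |C|)
      (fun n => (hY n).aestronglyMeasurable) (integrable_const _) ?_ ?_
    · intro n
      filter_upwards [hbd n] with ω hω
      rw [Real.norm_of_nonneg (le_max_right _ _)]
      exact max_le (by linarith [le_abs_self C]) (abs_nonneg _)
    · filter_upwards [hrec] with ω hω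
      obtain ⟨N, hN⟩ := hω
      rw [← tendsto_add_atTop_iff_nat N]
      have hb : ∀ n, max (X (n + N) ω - ε) 0 ≤ κ ^ n * max (X N ω - ε) 0 := by
        intro n
        induction n with
        | zero => simp
        | succ k ih =>
          have h := hκ _ _ (hN (k + N) (by omega))
          rw [show k + 1 + N = k + N + 1 by omega, pow_succ']
          calc _ ≤ _ := h
            _ ≤ κ * (κ ^ k * max (X N ω - ε) 0) := by gcongr
            _ = _ := by ring
      refine squeeze_zero (fun n => le_max_right _ _) hb ?_
      simpa using (tendsto_pow_atTop_nhds_zero_of_lt_one hk0 hk1).mul_const (max (X N ω - ε) 0)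
  have hlim2 : Tendsto (fun n => ε + ∫ ω, max (X n ω - ε) 0 ∂P) atTop (nhds ε) := by
    simpa using hlim.const_add ε
  rw [← hlim2.limsup_eq]
  refine limsup_le_limsup (Eventually.of_forall fun n => ?_) ?_ hlim2.isBoundedUnder_le
  · have h1 : ∫ ω, X n ω ∂P ≤ ∫ ω, (ε + max (X n ω - ε) 0) ∂P :=
      integral_mono (hint n) ((integrable_const ε).add (hY n))
        (fun ω => by have := le_max_left (X n ω - ε) 0; simp only; linarith)
    rw [integral_add (integrable_const ε) (hY n)] at h1
    simpa using h1
  · refine IsCoboundedUnder.of_frequently_ge (a := 0) (Frequently.of_forall fun n => ?_)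
    exact integral_nonneg_of_ae ((hbd n).mono fun ω h => h.1)
end

section
/- Let H be a real Hilbert space, C ⊆ H a nonempty closed convex set, and f : H → ℝ differentiable and m-strongly convex for some m > 0, and let x* be the minimizer of f over C (so that ⟨∇f(x*), y − x*⟩ ≥ 0 for all y ∈ C). Fix x ∈ C and μ > 0, and let g be a random vector in H with E[g] = ∇f(x) and E[‖g‖²] ≤ A + B‖x − x*‖² for constants A ≥ 0 and B ≥ 0. Let x⁺ = Π_C(x − μ g), where Π_C denotes the metric projection onto C. Then E[‖x⁺ − x*‖²] ≤ (1 − 2mμ + Bμ²)‖x − x*‖² + Aμ². -/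
open MeasureTheory
open scoped RealInnerProductSpace

/-- **one-step contraction of projected SGD.** Let `f` be `m`-strongly convex
with minimizer `x*` over the nonempty closed convex set `C` (so the variational inequality
`⟨∇f(x*), y − x*⟩ ≥ 0` holds on `C`). If `g` is an unbiased stochastic gradient at `x ∈ C`
with `E‖g‖² ≤ A + B‖x − x*‖²`, and `X⁺ = Π_C(x − μg)` (characterized by membership in `C`
and the obtuse-angle variational inequality of the metric projection), then
`E‖X⁺ − x*‖² ≤ (1 − 2mμ + Bμ²)‖x − x*‖² + Aμ²`. -/
theorem projected_sgd_one_step_contraction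
    {H : Type*} [NormedAddCommGroup H] [InnerProductSpace ℝ H] [CompleteSpace H]
    {Ω : Type*} [MeasurableSpace Ω] (P : Measure Ω) [IsProbabilityMeasure P]
    (C : Set H) (hCne : C.Nonempty) (hCcl : IsClosed C) (hCconv : Convex ℝ C)
    (f : H → ℝ) (m : ℝ) (hm : 0 < m)
    (hdiff : Differentiable ℝ f)
    (hconv : ∀ x y : H, f x + ⟪gradient f x, y - x⟫ + m / 2 * ‖y - x‖ ^ 2 ≤ f y)
    (xstar : H) (hxstarC : xstar ∈ C) (hmin : ∀ y ∈ C, f xstar ≤ f y)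
    (hVI : ∀ y ∈ C, 0 ≤ ⟪gradient f xstar, y - xstar⟫)
    (x : H) (hx : x ∈ C) (μ : ℝ) (hμ : 0 < μ)
    (g : Ω → H) (hgint : Integrable g P)
    (hg2int : Integrable (fun ω => ‖g ω‖ ^ 2) P)
    (hgmean : (∫ ω, g ω ∂P) = gradient f x)
    (A B : ℝ) (hA : 0 ≤ A) (hB : 0 ≤ B)
    (hg2 : (∫ ω, ‖g ω‖ ^ 2 ∂P) ≤ A + B * ‖x - xstar‖ ^ 2)
    (Xp : Ω → H) (hXpmeas : AEStronglyMeasurable Xp P)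
    (hXpC : ∀ ω, Xp ω ∈ C)
    (hproj : ∀ ω, ∀ y ∈ C, ⟪(x - μ • g ω) - Xp ω, y - Xp ω⟫ ≤ 0) :
    (∫ ω, ‖Xp ω - xstar‖ ^ 2 ∂P) ≤
      (1 - 2 * m * μ + B * μ ^ 2) * ‖x - xstar‖ ^ 2 + A * μ ^ 2 := by
  have hpt : ∀ ω, ‖Xp ω - xstar‖ ^ 2 ≤
      ‖x - xstar‖ ^ 2 - 2 * μ * ⟪x - xstar, g ω⟫ + μ ^ 2 * ‖g ω‖ ^ 2 := by
    intro ω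
    have h1 := hproj ω xstar hxstarC
    have h2 := norm_add_sq_real ((x - μ • g ω) - Xp ω) (Xp ω - xstar)
    have h3 : ((x - μ • g ω) - Xp ω) + (Xp ω - xstar) = (x - xstar) - μ • g ω := by abel
    have h4 := norm_sub_sq_real (x - xstar) (μ • g ω)
    rw [h3, h4, real_inner_smul_right, norm_smul, mul_pow, Real.norm_eq_abs, sq_abs] at h2
    have h5 : xstar - Xp ω = -(Xp ω - xstar) := by abel
    rw [h5, inner_neg_right] at h1
    nlinarith [sq_nonneg ‖(x - μ • g ω) - Xp ω‖]
  have hin : Integrable (fun ω => ⟪x - xstar, g ω⟫) P := hgint.const_inner _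
  have hI1 : Integrable (fun ω => ‖x - xstar‖ ^ 2 - 2 * μ * ⟪x - xstar, g ω⟫) P :=
    (integrable_const _).sub (hin.const_mul _)
  have hI2 : Integrable (fun ω => μ ^ 2 * ‖g ω‖ ^ 2) P := hg2int.const_mul _
  have hle : (∫ ω, ‖Xp ω - xstar‖ ^ 2 ∂P) ≤
      ∫ ω, (‖x - xstar‖ ^ 2 - 2 * μ * ⟪x - xstar, g ω⟫ + μ ^ 2 * ‖g ω‖ ^ 2) ∂P :=
    integral_mono_of_nonneg (Filter.Eventually.of_forall fun ω => sq_nonneg _)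
      (hI1.add hI2) (Filter.Eventually.of_forall hpt)
  rw [integral_add hI1 hI2, integral_sub (integrable_const _) (hin.const_mul _),
    integral_const_mul, integral_const_mul, integral_inner hgint, hgmean] at hle
  simp only [integral_const, probReal_univ, one_smul] at hle
  have hsc : m * ‖x - xstar‖ ^ 2 ≤ ⟪x - xstar, gradient f x⟫ := by
    have a1 := hconv x xstar
    have a2 := hconv xstar x
    have a3 := hVI x hx
    have h5 : xstar - x = -(x - xstar) := by abel
    rw [h5, inner_neg_right, norm_neg] at a1
    rw [real_inner_comm]
    linarith
  have k1 := mul_le_mul_of_nonneg_left hsc (by positivity : 0 ≤ 2 * μ)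
  have k2 := mul_le_mul_of_nonneg_left hg2 (sq_nonneg μ)
  linarith
end

section
/- Let H be a real Hilbert space, C ⊆ H a nonempty closed convex set, and f : H → ℝ differentiable, convex, and m-strongly convex for some m > 0 with minimizer x* over C. Let (Ω, 𝓕, P) be a probability space, let μ > 0 be a constant step size with r := 1 − mμ + Bμ² > 0, and suppose random points x(0), x(1), …, x(K) in C satisfy E[‖x(ℓ) − x*‖²] ≤ r · E[‖x(ℓ−1) − x*‖²] − 2μ (E[f(x(ℓ−1))] − f(x*)) + Aμ² for every ℓ = 1, …, K, for constants A ≥ 0, B ≥ 0, with E[‖x(0) − x*‖²] ≤ d₀. Define the weights γ(ℓ) = r^{−ℓ} and λ(ℓ) = γ(ℓ)/Σ_{τ=1}^{K} γ(τ) for ℓ = 1, …, K, and the averaged iterate x̄ = Σ_{ℓ=1}^{K} λ(ℓ) x(ℓ−1). Then E[f(x̄)] − f(x*) ≤ d₀ / (2μ Σ_{ℓ=1}^{K} γ(ℓ)) + Aμ/2. -/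
open MeasureTheory
open scoped RealInnerProductSpace

/-- **SGD with constant step size and geometric averaging, Lemma A.3.**
Under the per-step expected inequality
`E‖x(ℓ) − x*‖² ≤ r E‖x(ℓ−1) − x*‖² − 2μ (E f(x(ℓ−1)) − f(x*)) + Aμ²` with
`r = 1 − mμ + Bμ² > 0` and `E‖x(0) − x*‖² ≤ d₀`, the geometrically averaged iterate
`x̄ = Σ_{ℓ=1}^{K} λ(ℓ) x(ℓ−1)` (with `γ(ℓ) = r^{−ℓ}` and `λ(ℓ) = γ(ℓ)/Σ_τ γ(τ)`) satisfies
`E f(x̄) − f(x*) ≤ d₀ / (2μ Σ_ℓ γ(ℓ)) + Aμ/2`. -/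
theorem sgd_constant_step_averaging_bound
    {H : Type*} [NormedAddCommGroup H] [InnerProductSpace ℝ H] [CompleteSpace H]
    {Ω : Type*} [MeasurableSpace Ω] (P : Measure Ω) [IsProbabilityMeasure P]
    (C : Set H) (hCne : C.Nonempty) (hCcl : IsClosed C) (hCconv : Convex ℝ C)
    (f : H → ℝ) (hdiff : Differentiable ℝ f) (hfconv : ConvexOn ℝ Set.univ f)
    (m : ℝ) (hm : 0 < m)
    (hsconv : ∀ x y : H, f x + ⟪gradient f x, y - x⟫ + m / 2 * ‖y - x‖ ^ 2 ≤ f y)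
    (xstar : H) (hxstarC : xstar ∈ C) (hmin : ∀ y ∈ C, f xstar ≤ f y)
    (μ A B : ℝ) (hμ : 0 < μ) (hA : 0 ≤ A) (hB : 0 ≤ B)
    (r : ℝ) (hr : r = 1 - m * μ + B * μ ^ 2) (hrpos : 0 < r)
    (K : ℕ) (hK : 1 ≤ K)
    (x : ℕ → Ω → H)
    (hxC : ∀ ℓ ω, x ℓ ω ∈ C)
    (hxmeas : ∀ ℓ, AEStronglyMeasurable (x ℓ) P)
    (hintf : ∀ ℓ, Integrable (fun ω => f (x ℓ ω)) P)
    (hintd : ∀ ℓ, Integrable (fun ω => ‖x ℓ ω - xstar‖ ^ 2) P)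
    (d₀ : ℝ) (hd0 : (∫ ω, ‖x 0 ω - xstar‖ ^ 2 ∂P) ≤ d₀)
    (hrec : ∀ ℓ ∈ Finset.Icc 1 K,
      (∫ ω, ‖x ℓ ω - xstar‖ ^ 2 ∂P) ≤
        r * (∫ ω, ‖x (ℓ - 1) ω - xstar‖ ^ 2 ∂P)
          - 2 * μ * ((∫ ω, f (x (ℓ - 1) ω) ∂P) - f xstar) + A * μ ^ 2) :
    (∫ ω, f (∑ ℓ ∈ Finset.Icc 1 K,
        ((r ^ ℓ)⁻¹ / ∑ τ ∈ Finset.Icc 1 K, (r ^ τ)⁻¹) • x (ℓ - 1) ω) ∂P) - f xstar ≤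
      d₀ / (2 * μ * ∑ ℓ ∈ Finset.Icc 1 K, (r ^ ℓ)⁻¹) + A * μ / 2 := by
  set S : ℝ := ∑ τ ∈ Finset.Icc 1 K, (r ^ τ)⁻¹ with hS
  have hSpos : 0 < S := by
    apply Finset.sum_pos
    · intro i _; positivity
    · exact ⟨1, by simp [hK]⟩
  have hw0 : ∀ ℓ ∈ Finset.Icc 1 K, 0 ≤ (r ^ ℓ)⁻¹ / S := by
    intro i _; positivity
  have hw1 : ∑ ℓ ∈ Finset.Icc 1 K, (r ^ ℓ)⁻¹ / S = 1 := by
    rw [← Finset.sum_div]; exact div_self hSpos.ne'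
  have htel : ∀ n : ℕ, n ≤ K →
      (r ^ n)⁻¹ * (∫ ω, ‖x n ω - xstar‖ ^ 2 ∂P)
        + 2 * μ * ∑ ℓ ∈ Finset.Icc 1 n, (r ^ ℓ)⁻¹ * ((∫ ω, f (x (ℓ - 1) ω) ∂P) - f xstar)
        ≤ (∫ ω, ‖x 0 ω - xstar‖ ^ 2 ∂P) + A * μ ^ 2 * ∑ ℓ ∈ Finset.Icc 1 n, (r ^ ℓ)⁻¹ := by
    intro n
    induction n with
    | zero => intro _; simp
    | succ n ih =>
      intro hn
      have h1 := ih (by omega)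
      have h2 := hrec (n + 1) (by simp; omega)
      rw [Finset.sum_Icc_succ_top (by omega), Finset.sum_Icc_succ_top (by omega)]
      simp only [Nat.add_sub_cancel] at h2 ⊢
      have hp : 0 ≤ (r ^ (n + 1))⁻¹ := by positivity
      have h3 := mul_le_mul_of_nonneg_left h2 hp
      have h4 : (r ^ (n + 1))⁻¹ * r = (r ^ n)⁻¹ := by
        rw [pow_succ]; field_simp
      have h5 : (r ^ (n + 1))⁻¹ * (r * (∫ ω, ‖x n ω - xstar‖ ^ 2 ∂P)
          - 2 * μ * ((∫ ω, f (x n ω) ∂P) - f xstar) + A * μ ^ 2)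
          = (r ^ n)⁻¹ * (∫ ω, ‖x n ω - xstar‖ ^ 2 ∂P)
          - 2 * μ * ((r ^ (n + 1))⁻¹ * ((∫ ω, f (x n ω) ∂P) - f xstar))
          + A * μ ^ 2 * (r ^ (n + 1))⁻¹ := by
        rw [← h4]; ring
      rw [h5] at h3
      linarith
  have hK' := htel K le_rfl
  have haK : 0 ≤ (r ^ K)⁻¹ * (∫ ω, ‖x K ω - xstar‖ ^ 2 ∂P) :=
    mul_nonneg (by positivity) (integral_nonneg fun ω => by positivity)
  have hup : ∀ ω, f (∑ ℓ ∈ Finset.Icc 1 K, ((r ^ ℓ)⁻¹ / S) • x (ℓ - 1) ω)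
      ≤ ∑ ℓ ∈ Finset.Icc 1 K, ((r ^ ℓ)⁻¹ / S) * f (x (ℓ - 1) ω) := by
    intro ω
    have := hfconv.map_sum_le (p := fun ℓ => x (ℓ - 1) ω) hw0 hw1 (fun _ _ => Set.mem_univ _)
    simpa [smul_eq_mul] using this
  have hlow : ∀ ω, f xstar ≤ f (∑ ℓ ∈ Finset.Icc 1 K, ((r ^ ℓ)⁻¹ / S) • x (ℓ - 1) ω) := by
    intro ω
    exact hmin _ (hCconv.sum_mem hw0 hw1 (fun ℓ _ => hxC _ _))
  have hintu : Integrable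
      (fun ω => ∑ ℓ ∈ Finset.Icc 1 K, ((r ^ ℓ)⁻¹ / S) * f (x (ℓ - 1) ω)) P :=
    integrable_finsetSum _ fun ℓ _ => (hintf _).const_mul _
  have hmeas : AEStronglyMeasurable
      (fun ω => f (∑ ℓ ∈ Finset.Icc 1 K, ((r ^ ℓ)⁻¹ / S) • x (ℓ - 1) ω)) P := by
    apply hdiff.continuous.comp_aestronglyMeasurable
    exact Finset.aestronglyMeasurable_fun_sum _ fun ℓ _ => (hxmeas _).const_smul _
  have hintb : Integrable
      (fun ω => f (∑ ℓ ∈ Finset.Icc 1 K, ((r ^ ℓ)⁻¹ / S) • x (ℓ - 1) ω)) P :=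
    integrable_of_le_of_le hmeas (Filter.Eventually.of_forall hlow)
      (Filter.Eventually.of_forall hup) (integrable_const _) hintu
  have hJ := integral_mono hintb hintu hup
  rw [integral_finsetSum _ fun ℓ _ => (hintf _).const_mul _] at hJ
  simp only [integral_const_mul] at hJ
  set T : ℝ := ∑ ℓ ∈ Finset.Icc 1 K,
    (r ^ ℓ)⁻¹ * ((∫ ω, f (x (ℓ - 1) ω) ∂P) - f xstar) with hT
  have hTS : ∑ ℓ ∈ Finset.Icc 1 K, (r ^ ℓ)⁻¹ / S * ∫ ω, f (x (ℓ - 1) ω) ∂P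
      = T / S + f xstar := by
    have : T / S = ∑ ℓ ∈ Finset.Icc 1 K, ((r ^ ℓ)⁻¹ / S * (∫ ω, f (x (ℓ - 1) ω) ∂P)
        - (r ^ ℓ)⁻¹ / S * f xstar) := by
      rw [hT, Finset.sum_div]
      exact Finset.sum_congr rfl fun ℓ _ => by ring
    rw [this, Finset.sum_sub_distrib, ← Finset.sum_mul, hw1]; ring
  have hfin : T / S ≤ d₀ / (2 * μ * S) + A * μ / 2 := by
    have : d₀ / (2 * μ * S) + A * μ / 2 = ((d₀ + A * μ ^ 2 * S) / (2 * μ)) / S := by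
      field_simp
    rw [this]
    apply div_le_div_of_nonneg_right _ hSpos.le
    rw [le_div_iff₀ (by positivity)]
    linarith
  linarith
end

section
/- Let (Ω, 𝓕, P) be a probability space, let 𝒫 be a partially ordered set, and for each i ≥ 1 let φᵢ : 𝒫 → ℝ be monotone nondecreasing with 0 ≤ φᵢ(ψ) ≤ D for all ψ ∈ 𝒫 and a constant D. Fix ψ* ∈ 𝒫 and a constant φ* ≥ 0 with E[φᵢ(ψ*)] ≥ φ* for every i, where the arguments ψᵢ : Ω → 𝒫 are random and each φᵢ(ψᵢ) and φᵢ(ψ*) is measurable and integrable. Suppose there is an almost surely finite random index Ñ such that ψₙ ≥ ψ* for all n ≥ Ñ almost surely. Then liminf_{n→∞} E[(1/n) Σ_{i=1}^{n} φᵢ(ψᵢ)] ≥ φ*. -/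
open MeasureTheory Filter

/-- **parameter-estimation lemma, Section 3.4.** Estimates `φᵢ` taking values
in `[0, D]`, monotone in a partially ordered parameter, upward biased at the true auxiliary
parameter `ψ*` (`E[φᵢ(ψ*)] ≥ φ*`), and evaluated at random auxiliary parameters `ψᵢ` that
eventually dominate `ψ*` almost surely, satisfy
`liminf_{n→∞} E[(1/n) Σ_{i=1}^{n} φᵢ(ψᵢ)] ≥ φ*`. -/
theorem parameter_estimation_liminf_bound
    {Ω : Type*} [MeasurableSpace Ω] (P : Measure Ω) [IsProbabilityMeasure P]
    {Θ : Type*} [PartialOrder Θ]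
    (φ : ℕ → Ω → Θ → ℝ) (D : ℝ)
    (hmono : ∀ i ω, Monotone (φ i ω))
    (hbd : ∀ i ω ψ', 0 ≤ φ i ω ψ' ∧ φ i ω ψ' ≤ D)
    (ψstar : Θ) (φstar : ℝ) (hφstar : 0 ≤ φstar)
    (ψ : ℕ → Ω → Θ)
    (hint1 : ∀ i, Integrable (fun ω => φ i ω (ψ i ω)) P)
    (hint2 : ∀ i, Integrable (fun ω => φ i ω ψstar) P)
    (hbias : ∀ i, φstar ≤ ∫ ω, φ i ω ψstar ∂P)
    (hdom : ∀ᵐ ω ∂P, ∃ N : ℕ, ∀ n : ℕ, N ≤ n → ψstar ≤ ψ n ω) :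
    φstar ≤
      liminf (fun n : ℕ =>
        ∫ ω, (1 / (n : ℝ)) * ∑ i ∈ Finset.Icc 1 n, φ i ω (ψ i ω) ∂P) atTop := by
  have hlim : Tendsto (fun i => ∫ ω, min (φ i ω (ψ i ω) - φ i ω ψstar) 0 ∂P) atTop
      (nhds (∫ _ω, (0 : ℝ) ∂P)) := by
    refine tendsto_integral_of_dominated_convergence (fun _ => D) ?_ (integrable_const D) ?_ ?_
    · intro i
      exact (((hint1 i).sub (hint2 i)).inf (integrable_zero Ω ℝ P)).aestronglyMeasurable
    · intro i
      refine Eventually.of_forall fun ω => ?_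
      have h1 := hbd i ω (ψ i ω)
      have h2 := hbd i ω ψstar
      rw [Real.norm_eq_abs, abs_le]
      refine ⟨le_min (by linarith) (by linarith), (min_le_right _ _).trans (by linarith)⟩
    · filter_upwards [hdom] with ω ⟨N, hN⟩
      refine tendsto_const_nhds.congr' ?_
      filter_upwards [eventually_ge_atTop N] with n hn
      rw [min_eq_right]
      exact sub_nonneg.2 (hmono n ω (hN n hn))
  rw [integral_zero] at hlim
  have hge : ∀ i, φstar + ∫ ω, min (φ i ω (ψ i ω) - φ i ω ψstar) 0 ∂P
      ≤ ∫ ω, φ i ω (ψ i ω) ∂P := by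
    intro i
    have h1 : ∫ ω, min (φ i ω (ψ i ω) - φ i ω ψstar) 0 ∂P
        ≤ ∫ ω, (φ i ω (ψ i ω) - φ i ω ψstar) ∂P :=
      integral_mono (((hint1 i).sub (hint2 i)).inf (integrable_zero Ω ℝ P))
        ((hint1 i).sub (hint2 i)) (fun ω => min_le_left _ _)
    rw [integral_sub (hint1 i) (hint2 i)] at h1
    linarith [hbias i]
  have hle : ∀ i, ∫ ω, φ i ω (ψ i ω) ∂P ≤ D := by
    intro i
    have := integral_mono (hint1 i) (integrable_const D) (fun ω => (hbd i ω (ψ i ω)).2)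
    simpa using this
  have heq : ∀ n : ℕ, ∫ ω, (1 / (n : ℝ)) * ∑ i ∈ Finset.Icc 1 n, φ i ω (ψ i ω) ∂P
      = (n : ℝ)⁻¹ * ∑ i ∈ Finset.range n, ∫ ω, φ (i + 1) ω (ψ (i + 1) ω) ∂P := by
    intro n
    rw [integral_const_mul, integral_finsetSum _ (fun i _ => hint1 i), one_div]
    congr 1
    rw [Finset.range_eq_Ico, Finset.sum_Ico_add' (fun i => ∫ ω, φ i ω (ψ i ω) ∂P) 0 n 1]
    rfl
  have hces := ((hlim.const_add φstar).comp (tendsto_add_atTop_nat 1)).cesaro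
  rw [add_zero] at hces
  rw [← hces.liminf_eq]
  simp_rw [heq]
  refine liminf_le_liminf (Eventually.of_forall fun n => ?_) hces.isBoundedUnder_ge
    (IsBoundedUnder.isCoboundedUnder_ge ⟨D, ?_⟩)
  · exact mul_le_mul_of_nonneg_left (Finset.sum_le_sum fun i _ => hge (i + 1)) (by positivity)
  · rw [eventually_map]
    filter_upwards [eventually_gt_atTop 0] with n hn
    have hn' : (0 : ℝ) < n := by exact_mod_cast hn
    rw [inv_mul_le_iff₀ hn']
    have := Finset.sum_le_sum (s := Finset.range n) fun i _ => hle (i + 1)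
    simpa using this
end
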